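/- arXiv:2111.00949 — 2 statements merged into one kernel-verified Lean document; each statement's English description precedes it below -/
import Mathlib

section
/- Suppose n ≥ 1 and r ≥ 2. Then for every function h in C_b^{1,3}([0,∞)), |E[h(F_r)] − χ²_{(r−1)}h| ≤ (r/n)·[293‖h'‖ + (2269 + 431r/n)‖h''‖ + (3533 + 646r/n)‖h'''‖]. -/
open MeasureTheory Finset Real

noncomputable section

instance instMSPerm (r : ℕ) : MeasurableSpace (Equiv.Perm (Fin r)) := ⊤

/-- The joint law of `n` independent uniformly random permutations of `{1, …, r}`:
the uniform probability measure on the finite product space. -/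
def friedmanMeasure (n r : ℕ) : Measure (Fin n → Equiv.Perm (Fin r)) :=
  (PMF.uniformOfFintype (Fin n → Equiv.Perm (Fin r))).toMeasure

/-- `ρ_i(j) = π_i(j) - (r+1)/2`, where `π_i(j) ∈ {1, …, r}` is the rank assigned by the
`i`-th permutation to treatment `j` (a permutation of `Fin r` assigns values in `{0, …, r-1}`,
hence the `+ 1`). -/
def rho (n r : ℕ) (i : Fin n) (j : Fin r) (ω : Fin n → Equiv.Perm (Fin r)) : ℝ :=
  ((ω i j : ℕ) : ℝ) + 1 - ((r : ℝ) + 1) / 2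

/-- `S_j = (√12/√(r(r+1)n)) ∑_{i=1}^n ρ_i(j)`. -/
def Sstat (n r : ℕ) (j : Fin r) (ω : Fin n → Equiv.Perm (Fin r)) : ℝ :=
  Real.sqrt 12 / Real.sqrt ((r : ℝ) * ((r : ℝ) + 1) * (n : ℝ)) * ∑ i, rho n r i j ω

/-- Friedman's statistic `F_r = ∑_{j=1}^r S_j²`. -/
def friedman (n r : ℕ) (ω : Fin n → Equiv.Perm (Fin r)) : ℝ :=
  ∑ j, (Sstat n r j ω) ^ 2

/-- The chi-square distribution with `p` degrees of freedom: the Gamma distribution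
with shape `p/2` and rate `1/2`. -/
def chiSq (p : ℕ) : Measure ℝ := ProbabilityTheory.gammaMeasure ((p : ℝ) / 2) (1 / 2)

end

/-!
Stein's method. The function `h - χ²_{(r-1)} h` is written as `x g' + ((r - 1) / 2 - x / 2) g`. The
derivatives of `g` solve Gamma Stein equations of larger shape parameter, so `g'`, `g''` and
`x g'''` are bounded in terms of `h'` and `h''`, although `g'''` may blow up at `0`.

Friedman's statistic is the squared length of a sum of `n` independent steps `u`. Removing one step
leaves an independent vector `w` with `|w + u|² = |w|² + |u|² + 2 ⟨w, u⟩`. Here `|u|² = (r - 1) / n`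
is deterministic and, since reversing all ranks negates `u`, the increment `2 ⟨w, u⟩` is symmetric.
Odd orders of the Taylor expansion therefore cancel, which gives the rate `1 / n`. The factor
`1 / x` in the bound on `g'''` is harmless: if `|w|²` exceeds a multiple of `|u|²`, the expansion
stays at distance of order `|w|²` from `0` and the fourth moment of the increment, of order
`|w|⁴ / n²`, compensates it; otherwise the bound on `g'` suffices. The second and fourth moments of
`⟨w, u⟩` come from the exchangeable pair that composes a random permutation with a random
transposition.
-/

open Filter
open scoped Topology BigOperators

/-- The unnormalised Gamma weight `x ^ α * exp (-β x)`. The Gamma law with shape `a` and rate `β`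
has density proportional to `gammaWeight (a - 1) β`, so that the exponent is the shape minus one. -/
noncomputable def gammaWeight (α β x : ℝ) : ℝ := x ^ α * exp (-(β * x))

section GammaWeight

variable {α β c M x : ℝ} {y : ℝ → ℝ}

lemma gammaWeight_pos (α β : ℝ) (hx : 0 < x) : 0 < gammaWeight α β x :=
  mul_pos (rpow_pos_of_pos hx α) (exp_pos _)

lemma gammaWeight_eq_mul (α β : ℝ) (hx : 0 < x) :
    gammaWeight α β x = x * gammaWeight (α - 1) β x := by
  unfold gammaWeight
  rw [rpow_sub_one hx.ne']
  field_simp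

lemma hasDerivAt_gammaWeight (α β : ℝ) (hx : 0 < x) :
    HasDerivAt (gammaWeight α β) (gammaWeight (α - 1) β x * (α - β * x)) x := by
  have hpow := hasDerivAt_rpow_const (p := α) (Or.inl hx.ne')
  have hexp : HasDerivAt (fun t => exp (-(β * t))) (exp (-(β * x)) * -(β * 1)) x :=
    ((hasDerivAt_id x).const_mul β).neg.exp
  refine HasDerivAt.congr_deriv (f := gammaWeight α β) (hpow.mul hexp) ?_
  unfold gammaWeight
  rw [rpow_sub_one hx.ne']
  field_simp
  ring

lemma continuousOn_gammaWeight (α β : ℝ) : ContinuousOn (gammaWeight α β) (Set.Ioi 0) :=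
  fun _ hx => (hasDerivAt_gammaWeight α β hx).continuousAt.continuousWithinAt

lemma norm_gammaWeight_mul_le (α β : ℝ) (hx : 0 < x) (hy : |y x| ≤ c * (1 + x)) :
    ‖gammaWeight α β x * y x‖ ≤ c * (gammaWeight α β x + gammaWeight (α + 1) β x) := by
  have hw := gammaWeight_pos α β hx
  rw [norm_mul, norm_of_nonneg hw.le, gammaWeight_eq_mul (α + 1) β hx, add_sub_cancel_right]
  calc gammaWeight α β x * ‖y x‖ ≤ gammaWeight α β x * (c * (1 + x)) := by gcongr; exact hy
    _ = c * (gammaWeight α β x + x * gammaWeight α β x) := by ring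

lemma tendsto_gammaWeight_nhdsGT (hα : 0 < α) (β : ℝ) :
    Tendsto (gammaWeight α β) (𝓝[>] 0) (𝓝 0) := by
  have hcont : ContinuousAt (gammaWeight α β) 0 := by
    unfold gammaWeight
    have := continuousAt_rpow_const 0 α (Or.inr hα.le)
    fun_prop
  have h0 : gammaWeight α β 0 = 0 := by simp [gammaWeight, zero_rpow hα.ne']
  exact (h0 ▸ hcont.tendsto).mono_left nhdsWithin_le_nhds

lemma tendsto_gammaWeight_atTop (α : ℝ) (hβ : 0 < β) :
    Tendsto (gammaWeight α β) atTop (𝓝 0) :=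
  (tendsto_rpow_mul_exp_neg_mul_atTop_nhds_zero α β hβ).congr fun x => by
    rw [gammaWeight, neg_mul]

lemma tendsto_gammaWeight_mul_nhdsGT (hα : 0 < α) (hy : ∀ x, 0 < x → |y x| ≤ c * (1 + x)) :
    Tendsto (fun x => gammaWeight α β x * y x) (𝓝[>] 0) (𝓝 0) := by
  refine squeeze_zero_norm' (eventually_mem_nhdsWithin.mono fun x hx =>
    norm_gammaWeight_mul_le α β hx (hy x hx)) ?_
  simpa using ((tendsto_gammaWeight_nhdsGT hα β).add
    (tendsto_gammaWeight_nhdsGT (by linarith : 0 < α + 1) β)).const_mul c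

lemma tendsto_gammaWeight_mul_atTop (hβ : 0 < β) (hy : ∀ x, 0 < x → |y x| ≤ c * (1 + x)) :
    Tendsto (fun x => gammaWeight α β x * y x) atTop (𝓝 0) := by
  refine squeeze_zero_norm' ((eventually_gt_atTop 0).mono fun x hx =>
    norm_gammaWeight_mul_le α β hx (hy x hx)) ?_
  simpa using ((tendsto_gammaWeight_atTop α hβ).add
    (tendsto_gammaWeight_atTop (α + 1) hβ)).const_mul c

lemma integrableOn_gammaWeight (hα : -1 < α) (hβ : 0 < β) :
    IntegrableOn (gammaWeight α β) (Set.Ioi 0) :=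
  (integrableOn_rpow_mul_exp_neg_mul_rpow (p := 1) hα one_pos hβ).congr_fun
    (fun x _ => by simp only [gammaWeight, rpow_one, neg_mul]) measurableSet_Ioi

lemma integrableOn_gammaWeight_mul (hα : -1 < α) (hβ : 0 < β) (hyc : ContinuousOn y (Set.Ioi 0))
    (hy : ∀ x, 0 < x → |y x| ≤ c * (1 + x)) :
    IntegrableOn (fun x => gammaWeight α β x * y x) (Set.Ioi 0) := by
  have hmajorant : IntegrableOn (fun x => c * (gammaWeight α β x + gammaWeight (α + 1) β x))
      (Set.Ioi 0) :=
    ((integrableOn_gammaWeight hα hβ).add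
      (integrableOn_gammaWeight (by linarith) hβ)).const_mul c
  refine hmajorant.mono'
    (((continuousOn_gammaWeight α β).mul hyc).aestronglyMeasurable measurableSet_Ioi) ?_
  exact (ae_restrict_iff' measurableSet_Ioi).2
    (ae_of_all _ fun x hx => norm_gammaWeight_mul_le α β hx (hy x hx))

/-- The exponent is the tangent line at `x` of the concave function `log (gammaWeight α β)`. -/
lemma gammaWeight_le_mul_exp_tangent (hα : 0 ≤ α) (β : ℝ) {t : ℝ} (hx : 0 < x) (ht : 0 < t) :
    gammaWeight α β t ≤ gammaWeight α β x * exp ((t / x - 1) * (α - β * x)) := by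
  have hpow : (t / x) ^ α ≤ exp ((t / x - 1) * α) := by
    rw [exp_mul]
    exact rpow_le_rpow (by positivity) (by linarith [add_one_le_exp (t / x - 1)]) hα
  unfold gammaWeight
  calc t ^ α * exp (-(β * t))
      = x ^ α * (t / x) ^ α * exp (-(β * t)) := by
        rw [← mul_rpow hx.le (by positivity), mul_div_cancel₀ t hx.ne']
    _ ≤ x ^ α * exp ((t / x - 1) * α) * exp (-(β * t)) := by gcongr
    _ = x ^ α * exp (-(β * x)) * exp ((t / x - 1) * (α - β * x)) := by
        simp only [mul_assoc, ← exp_add]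
        congr 2
        field_simp
        ring

lemma abs_gammaWeight_mul_le (hy : |y x| ≤ M) (hx : 0 < x) :
    |gammaWeight (α - 1) β x * y x| ≤ M * gammaWeight (α - 1) β x := by
  have hw := gammaWeight_pos (α - 1) β hx
  rw [abs_mul, abs_of_pos hw, mul_comm]
  gcongr

lemma abs_gammaWeight_mul_le_exp (hα : 1 ≤ α) (hM : 0 ≤ M) {t : ℝ} (hy : |y t| ≤ M) (hx : 0 < x)
    (ht : 0 < t) (htx : (t / x - 1) * (α - 1 - β * x) ≤ 1 - t / x) :
    |gammaWeight (α - 1) β t * y t| ≤ M * gammaWeight α β x * (exp (1 - t / x) * x⁻¹) := calc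
  |gammaWeight (α - 1) β t * y t| ≤ M * gammaWeight (α - 1) β t := abs_gammaWeight_mul_le hy ht
  _ ≤ M * (gammaWeight (α - 1) β x * exp ((t / x - 1) * (α - 1 - β * x))) := by
    gcongr; exact gammaWeight_le_mul_exp_tangent (by linarith) β hx ht
  _ ≤ M * (gammaWeight (α - 1) β x * exp (1 - t / x)) := by
    have := gammaWeight_pos (α - 1) β hx
    gcongr
  _ = M * gammaWeight α β x * (exp (1 - t / x) * x⁻¹) := by
    rw [gammaWeight_eq_mul α β hx]
    field_simp

lemma hasDerivAt_exp_one_sub_div (x t : ℝ) :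
    HasDerivAt (fun t => exp (1 - t / x)) (-(exp (1 - t / x) * x⁻¹)) t := by
  simpa [div_eq_mul_inv] using (((hasDerivAt_id t).mul_const x⁻¹).const_sub 1).exp

end GammaWeight

section Comparison

variable {u u' v v' P P' : ℝ → ℝ} {a l x : ℝ}

lemma le_of_tendsto_nhdsGT_of_deriv_nonneg (hx : a < x)
    (hu : ∀ t ∈ Set.Ioc a x, HasDerivAt u (u' t) t) (hu' : ∀ t ∈ Set.Ioo a x, 0 ≤ u' t)
    (hl : Tendsto u (𝓝[>] a) (𝓝 l)) : l ≤ u x := by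
  have hmono : MonotoneOn u (Set.Ioc a x) := by
    refine monotoneOn_of_hasDerivWithinAt_nonneg (f' := u') (convex_Ioc a x)
      (fun t ht => (hu t ht).continuousAt.continuousWithinAt) ?_ ?_ <;> rw [interior_Ioc]
    · exact fun t ht => (hu t (Set.Ioo_subset_Ioc_self ht)).hasDerivWithinAt
    · exact hu'
  refine le_of_tendsto hl ?_
  filter_upwards [Ioc_mem_nhdsGT hx] with t ht
  exact hmono ht (Set.right_mem_Ioc.2 hx) ht.2

lemma le_of_tendsto_atTop_of_deriv_nonpos
    (hu : ∀ t ∈ Set.Ici x, HasDerivAt u (u' t) t) (hu' : ∀ t ∈ Set.Ioi x, u' t ≤ 0)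
    (hl : Tendsto u atTop (𝓝 l)) : l ≤ u x := by
  have hanti : AntitoneOn u (Set.Ici x) := by
    refine antitoneOn_of_hasDerivWithinAt_nonpos (f' := u') (convex_Ici x)
      (fun t ht => (hu t ht).continuousAt.continuousWithinAt) ?_ ?_ <;> rw [interior_Ici]
    · exact fun t ht => (hu t (Set.Ioi_subset_Ici_self ht)).hasDerivWithinAt
    · exact hu'
  refine le_of_tendsto hl ?_
  filter_upwards [eventually_ge_atTop x] with t ht
  exact hanti Set.self_mem_Ici ht ht

lemma abs_le_of_abs_deriv_le_of_tendsto_nhdsGT (hx : a < x)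
    (hv : ∀ t ∈ Set.Ioc a x, HasDerivAt v (v' t) t) (hP : ∀ t ∈ Set.Ioc a x, HasDerivAt P (P' t) t)
    (hle : ∀ t ∈ Set.Ioo a x, |v' t| ≤ P' t)
    (hv0 : Tendsto v (𝓝[>] a) (𝓝 0)) (hP0 : Tendsto P (𝓝[>] a) (𝓝 0)) : |v x| ≤ P x := by
  have hsub := le_of_tendsto_nhdsGT_of_deriv_nonneg hx (fun t ht => (hP t ht).sub (hv t ht))
    (fun t ht => by linarith [(abs_le.1 (hle t ht)).2]) (hP0.sub hv0)
  have hadd := le_of_tendsto_nhdsGT_of_deriv_nonneg hx (fun t ht => (hP t ht).add (hv t ht))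
    (fun t ht => by linarith [(abs_le.1 (hle t ht)).1]) (hP0.add hv0)
  simp only [Pi.sub_apply, Pi.add_apply] at hsub hadd
  exact abs_le.2 ⟨by linarith, by linarith⟩

lemma abs_le_of_abs_deriv_le_of_tendsto_atTop
    (hv : ∀ t ∈ Set.Ici x, HasDerivAt v (v' t) t) (hP : ∀ t ∈ Set.Ici x, HasDerivAt P (P' t) t)
    (hle : ∀ t ∈ Set.Ioi x, |v' t| ≤ -P' t)
    (hv0 : Tendsto v atTop (𝓝 0)) (hP0 : Tendsto P atTop (𝓝 0)) : |v x| ≤ P x := by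
  have hsub := le_of_tendsto_atTop_of_deriv_nonpos (fun t ht => (hP t ht).sub (hv t ht))
    (fun t ht => by linarith [(abs_le.1 (hle t ht)).1]) (hP0.sub hv0)
  have hadd := le_of_tendsto_atTop_of_deriv_nonpos (fun t ht => (hP t ht).add (hv t ht))
    (fun t ht => by linarith [(abs_le.1 (hle t ht)).2]) (hP0.add hv0)
  simp only [Pi.sub_apply, Pi.add_apply] at hsub hadd
  exact abs_le.2 ⟨by linarith, by linarith⟩

lemma abs_sub_le_of_abs_hasDerivAt_le {f f' : ℝ → ℝ} {C a b : ℝ} (hab : a ≤ b)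
    (hf : ContinuousOn f (Set.Icc a b)) (hf' : ∀ x ∈ Set.Ioo a b, HasDerivAt f (f' x) x)
    (hC : ∀ x ∈ Set.Ioo a b, |f' x| ≤ C) : |f b - f a| ≤ C * (b - a) := by
  rcases hab.eq_or_lt with rfl | hab
  · simp
  · obtain ⟨ξ, hξ, hslope⟩ := exists_hasDerivAt_eq_slope f f' hab hf hf'
    have hpos := sub_pos.2 hab
    rw [eq_div_iff hpos.ne'] at hslope
    rw [← hslope, abs_mul, abs_of_pos hpos]
    exact mul_le_mul_of_nonneg_right (hC ξ hξ) hpos.le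

end Comparison

/-- `v` is a primitive of `gammaWeight (α - 1) β * K` on `(0, ∞)` vanishing at both ends. Then
`v / gammaWeight α β` solves the Gamma Stein equation with right-hand side `K`. -/
structure IsGammaPrimitive (α β : ℝ) (K v : ℝ → ℝ) : Prop where
  hasDerivAt : ∀ x, 0 < x → HasDerivAt v (gammaWeight (α - 1) β x * K x) x
  tendsto_nhdsGT : Tendsto v (𝓝[>] 0) (𝓝 0)
  tendsto_atTop : Tendsto v atTop (𝓝 0)

namespace IsGammaPrimitive

variable {α β C M x : ℝ} {K L u v : ℝ → ℝ}

lemma weight (hα : 0 < α) (hβ : 0 < β) :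
    IsGammaPrimitive α β (fun x => α - β * x) (gammaWeight α β) :=
  ⟨fun _ hx => hasDerivAt_gammaWeight α β hx, tendsto_gammaWeight_nhdsGT hα β,
    tendsto_gammaWeight_atTop α hβ⟩

lemma add (hu : IsGammaPrimitive α β K u) (hv : IsGammaPrimitive α β L v) :
    IsGammaPrimitive α β (fun x => K x + L x) (fun x => u x + v x) where
  hasDerivAt x hx := ((hu.hasDerivAt x hx).add (hv.hasDerivAt x hx)).congr_deriv (by ring)
  tendsto_nhdsGT := by simpa using hu.tendsto_nhdsGT.add hv.tendsto_nhdsGT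
  tendsto_atTop := by simpa using hu.tendsto_atTop.add hv.tendsto_atTop

lemma const_mul (a : ℝ) (hv : IsGammaPrimitive α β K v) :
    IsGammaPrimitive α β (fun x => a * K x) (fun x => a * v x) where
  hasDerivAt x hx := ((hv.hasDerivAt x hx).const_mul a).congr_deriv (by ring)
  tendsto_nhdsGT := by simpa using hv.tendsto_nhdsGT.const_mul a
  tendsto_atTop := by simpa using hv.tendsto_atTop.const_mul a

lemma nonneg_of_antitoneOn (hu : IsGammaPrimitive α β K u) (hK : AntitoneOn K (Set.Ioi 0))
    (hx : 0 < x) : 0 ≤ u x := by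
  rcases le_total 0 (K x) with hKx | hKx
  · refine le_of_tendsto_nhdsGT_of_deriv_nonneg hx (fun t ht => hu.hasDerivAt t ht.1)
      (fun t ht => ?_) hu.tendsto_nhdsGT
    exact mul_nonneg (gammaWeight_pos _ β ht.1).le (hKx.trans (hK ht.1 hx ht.2.le))
  · refine le_of_tendsto_atTop_of_deriv_nonpos (fun t ht => hu.hasDerivAt t (hx.trans_le ht))
      (fun t ht => ?_) hu.tendsto_atTop
    have ht0 : 0 < t := hx.trans ht
    exact mul_nonpos_of_nonneg_of_nonpos (gammaWeight_pos _ β ht0).le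
      ((hK hx ht0 (le_of_lt ht)).trans hKx)

/-- `C / β * gammaWeight α β` is the primitive of the weighted linear function `C / β * (α - β x)`
of slope `-C`, and adding `± K` to this function leaves it antitone. -/
lemma abs_le_of_lipschitz (hv : IsGammaPrimitive α β K v) (hα : 0 < α) (hβ : 0 < β)
    (hK : ∀ s t, 0 < s → s ≤ t → |K t - K s| ≤ C * (t - s)) (hx : 0 < x) :
    |v x| ≤ C / β * gammaWeight α β x := by
  have hlin : ∀ t, C / β * (α - β * t) = C / β * α - C * t := fun t => by field_simp
  have nonneg : ∀ ε : ℝ, |ε| = 1 → 0 ≤ C / β * gammaWeight α β x + ε * v x := fun ε hε => by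
    refine (((weight hα hβ).const_mul (C / β)).add (hv.const_mul ε)).nonneg_of_antitoneOn ?_ hx
    intro s hs t _ hst
    have hε' : ε * (K t - K s) ≤ C * (t - s) := calc
      ε * (K t - K s) ≤ |ε * (K t - K s)| := le_abs_self _
      _ = |K t - K s| := by rw [abs_mul, hε, one_mul]
      _ ≤ C * (t - s) := hK s t hs hst
    simp only [hlin]
    linarith
  exact abs_le.2 ⟨by linarith [nonneg 1 (by simp)], by linarith [nonneg (-1) (by simp)]⟩

lemma abs_le_of_le_mode (hv : IsGammaPrimitive α β K v) (hα : 1 ≤ α)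
    (hK : ∀ x, 0 < x → |K x| ≤ M) (hx : 0 < x) (hxα : β * x ≤ α) :
    |v x| ≤ M * gammaWeight α β x * (exp 1 - 1) := by
  have hM : 0 ≤ M := (abs_nonneg _).trans (hK x hx)
  have hmajorant (t : ℝ) : HasDerivAt
      (fun t => M * gammaWeight α β x * (exp 1 - exp (1 - t / x)))
      (M * gammaWeight α β x * (exp (1 - t / x) * x⁻¹)) t := by
    simpa using ((hasDerivAt_exp_one_sub_div x t).const_sub (exp 1)).const_mul
      (M * gammaWeight α β x)
  have h := abs_le_of_abs_deriv_le_of_tendsto_nhdsGT hx (fun t ht => hv.hasDerivAt t ht.1)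
    (fun t _ => hmajorant t) (fun t ht => ?_) hv.tendsto_nhdsGT ?_
  · simpa [hx.ne'] using h
  · refine abs_gammaWeight_mul_le_exp hα hM (hK t ht.1) hx ht.1 ?_
    have : t / x < 1 := (div_lt_one hx).2 ht.2
    nlinarith
  · simpa using (hmajorant 0).continuousAt.tendsto.mono_left nhdsWithin_le_nhds

lemma abs_le_of_mode_le (hv : IsGammaPrimitive α β K v) (hα : 1 ≤ α)
    (hK : ∀ x, 0 < x → |K x| ≤ M) (hx : 0 < x) (hαx : α ≤ β * x) :
    |v x| ≤ M * gammaWeight α β x := by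
  have hM : 0 ≤ M := (abs_nonneg _).trans (hK x hx)
  have h := abs_le_of_abs_deriv_le_of_tendsto_atTop
    (fun t (ht : x ≤ t) => hv.hasDerivAt t (hx.trans_le ht))
    (fun t _ => (hasDerivAt_exp_one_sub_div x t).const_mul (M * gammaWeight α β x))
    (fun t ht => ?_) hv.tendsto_atTop ?_
  · simpa [hx.ne'] using h
  · have ht0 : 0 < t := hx.trans ht
    rw [mul_neg, neg_neg]
    refine abs_gammaWeight_mul_le_exp hα hM (hK t ht0) hx ht0 ?_
    have : 1 < t / x := (one_lt_div hx).2 ht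
    nlinarith
  · have hbot : Tendsto (fun t : ℝ => 1 - t / x) atTop atBot :=
      tendsto_const_nhds.add_atBot (tendsto_neg_atTop_atBot.comp (tendsto_id.atTop_div_const hx))
    simpa using (tendsto_exp_atBot.comp hbot).const_mul (M * gammaWeight α β x)

lemma abs_le (hv : IsGammaPrimitive α β K v) (hα : 1 ≤ α) (hK : ∀ x, 0 < x → |K x| ≤ M)
    (hx : 0 < x) : |v x| ≤ 1.72 * M * gammaWeight α β x := by
  have hMw : 0 ≤ M * gammaWeight α β x :=
    mul_nonneg ((abs_nonneg _).trans (hK x hx)) (gammaWeight_pos α β hx).le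
  rcases le_total (β * x) α with h | h
  · nlinarith [hv.abs_le_of_le_mode hα hK hx h, exp_one_lt_d9]
  · nlinarith [hv.abs_le_of_mode_le hα hK hx h]

lemma abs_sub_mul_abs_le (hv : IsGammaPrimitive α β K v) (hα : 0 < α) (hβ : 0 < β)
    (hK : ∀ x, 0 < x → |K x| ≤ M) (hx : 0 < x) :
    |α - β * x| * |v x| ≤ M * gammaWeight α β x := by
  have hv' := hv.const_mul (α - β * x)
  have hw := (weight hα hβ).const_mul M
  have hderiv : ∀ t, 0 < t → |α - β * x| ≤ |α - β * t| →
      |gammaWeight (α - 1) β t * ((α - β * x) * K t)| ≤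
        gammaWeight (α - 1) β t * (M * |α - β * t|) := fun t ht hxt => by
    rw [abs_mul, abs_mul, abs_of_pos (gammaWeight_pos _ β ht), mul_comm M]
    have := gammaWeight_pos (α - 1) β ht
    gcongr
    exact hK t ht
  rw [← abs_mul]
  rcases le_total (β * x) α with hxα | hxα
  · refine abs_le_of_abs_deriv_le_of_tendsto_nhdsGT hx (fun t ht => hv'.hasDerivAt t ht.1)
      (fun t ht => hw.hasDerivAt t ht.1) (fun t ht => ?_) hv'.tendsto_nhdsGT hw.tendsto_nhdsGT
    have htx : β * t ≤ β * x := mul_le_mul_of_nonneg_left ht.2.le hβ.le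
    have h := hderiv t ht.1 (abs_le_abs_of_nonneg (by linarith) (by linarith))
    rwa [abs_of_nonneg (by linarith : 0 ≤ α - β * t)] at h
  · refine abs_le_of_abs_deriv_le_of_tendsto_atTop (fun t ht => hv'.hasDerivAt t (hx.trans_le ht))
      (fun t ht => hw.hasDerivAt t (hx.trans_le ht)) (fun t ht => ?_) hv'.tendsto_atTop
      hw.tendsto_atTop
    have htx : β * x ≤ β * t := mul_le_mul_of_nonneg_left (le_of_lt ht) hβ.le
    have h := hderiv t (hx.trans ht) (abs_le_abs_of_nonpos (by linarith) (by linarith))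
    rw [abs_of_nonpos (by linarith : α - β * t ≤ 0)] at h
    linarith

end IsGammaPrimitive

/-- `k` solves the Gamma Stein equation `x k' + (α - β x) k = K` on `(0, ∞)`; the derivative `k'`
is a parameter because it solves the equation of index `α + 1` in turn. -/
structure IsGammaSolution (α β : ℝ) (K k k' : ℝ → ℝ) : Prop where
  hasDerivAt : ∀ x, 0 < x → HasDerivAt k (k' x) x
  equation : ∀ x, 0 < x → x * k' x + (α - β * x) * k x = K x

lemma IsGammaPrimitive.isGammaSolution {α β : ℝ} {K k v : ℝ → ℝ} (hv : IsGammaPrimitive α β K v)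
    (hk : ∀ x, 0 < x → k x = v x / gammaWeight α β x) :
    IsGammaSolution α β K k fun x => (K x - (α - β * x) * k x) / x where
  hasDerivAt x hx := by
    have hw := gammaWeight_pos α β hx
    have hquot := ((hv.hasDerivAt x hx).div (hasDerivAt_gammaWeight α β hx) hw.ne')
    refine (hquot.congr_of_eventuallyEq ((lt_mem_nhds hx).mono hk)).congr_deriv ?_
    have hw' := gammaWeight_pos (α - 1) β hx
    rw [hk x hx, gammaWeight_eq_mul α β hx]
    field_simp
  equation x hx := by field_simp; ring

namespace IsGammaSolution

variable {α β c G M x : ℝ} {k k' K K' : ℝ → ℝ}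

lemma deriv (hk : IsGammaSolution α β K k k') (hK : ∀ x, 0 < x → HasDerivAt K (K' x) x) :
    IsGammaSolution (α + 1) β (fun x => K' x + β * k x) k'
      fun x => (K' x + β * k x - (α + 1 - β * x) * k' x) / x where
  hasDerivAt x hx := by
    have heq : ∀ t, 0 < t → k' t = (K t - (α - β * t) * k t) / t := fun t ht => by
      rw [← hk.equation t ht]
      field_simp
      ring
    have hlin : HasDerivAt (fun t => α - β * t) (-(β * 1)) x :=
      ((hasDerivAt_id x).const_mul β).const_sub α
    have hquot := ((hK x hx).sub (hlin.mul (hk.hasDerivAt x hx))).div (hasDerivAt_id x) hx.ne'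
    refine (hquot.congr_of_eventuallyEq ((lt_mem_nhds hx).mono heq)).congr_deriv ?_
    simp only [Pi.mul_apply, Pi.sub_apply, id, mul_one]
    rw [heq x hx]
    field_simp
    ring
  equation x hx := by field_simp; ring

lemma abs_mul_deriv_le_growth (hk : IsGammaSolution α β K k k') (hα : 0 ≤ α) (hβ : 0 ≤ β)
    (hG : |k x| ≤ G) (hK : |K x| ≤ c * (1 + x)) (hx : 0 < x) :
    |x * k' x| ≤ (c + (α + β) * G) * (1 + x) := by
  have hG0 : 0 ≤ G := (abs_nonneg _).trans hG
  calc |x * k' x| = |K x - (α - β * x) * k x| := by rw [← hk.equation x hx, add_sub_cancel_right]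
    _ ≤ |K x| + |α - β * x| * |k x| := by rw [← abs_mul]; exact abs_sub _ _
    _ ≤ c * (1 + x) + (α + β * x) * G := by
      gcongr
      exact abs_le.2 ⟨by nlinarith, by nlinarith⟩
    _ ≤ (c + (α + β) * G) * (1 + x) := by
      nlinarith [mul_nonneg (mul_nonneg hα hG0) hx.le, mul_nonneg hβ hG0]

lemma isGammaPrimitive (hk : IsGammaSolution α β K k k') (hα : 1 < α) (hβ : 0 < β)
    (hgrowth : ∀ x, 0 < x → |x * k x| ≤ c * (1 + x)) :
    IsGammaPrimitive α β K (fun x => gammaWeight α β x * k x) := by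
  have heq : ∀ x, 0 < x → gammaWeight (α - 1) β x * (x * k x) = gammaWeight α β x * k x :=
    fun x hx => by rw [gammaWeight_eq_mul α β hx]; ring
  refine ⟨fun x hx => ?_, ?_, ?_⟩
  · refine ((hasDerivAt_gammaWeight α β hx).mul (hk.hasDerivAt x hx)).congr_deriv ?_
    rw [← hk.equation x hx, gammaWeight_eq_mul α β hx]
    ring
  · exact (tendsto_gammaWeight_mul_nhdsGT (sub_pos.2 hα) hgrowth).congr'
      (eventually_mem_nhdsWithin.mono heq)
  · exact (tendsto_gammaWeight_mul_atTop hβ hgrowth).congr' ((eventually_gt_atTop 0).mono heq)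

lemma abs_le (hk : IsGammaSolution α β K k k') (hα : 1 < α) (hβ : 0 < β)
    (hgrowth : ∀ x, 0 < x → |x * k x| ≤ c * (1 + x)) (hK : ∀ x, 0 < x → |K x| ≤ M)
    (hx : 0 < x) : |k x| ≤ 1.72 * M := by
  have hw := gammaWeight_pos α β hx
  have h := (hk.isGammaPrimitive hα hβ hgrowth).abs_le hα.le hK hx
  rw [abs_mul, abs_of_pos hw, mul_comm] at h
  exact le_of_mul_le_mul_right h hw

lemma abs_mul_deriv_le (hk : IsGammaSolution α β K k k') (hα : 1 < α) (hβ : 0 < β)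
    (hgrowth : ∀ x, 0 < x → |x * k x| ≤ c * (1 + x)) (hK : ∀ x, 0 < x → |K x| ≤ M)
    (hx : 0 < x) : |x * k' x| ≤ 2 * M := by
  have hw := gammaWeight_pos α β hx
  have h := (hk.isGammaPrimitive hα hβ hgrowth).abs_sub_mul_abs_le (one_pos.trans hα) hβ hK hx
  rw [abs_mul (gammaWeight α β x), abs_of_pos hw, mul_left_comm, mul_comm M] at h
  calc |x * k' x| = |K x - (α - β * x) * k x| := by rw [← hk.equation x hx, add_sub_cancel_right]
    _ ≤ |K x| + |α - β * x| * |k x| := by rw [← abs_mul]; exact abs_sub _ _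
    _ ≤ M + M := add_le_add (hK x hx) (le_of_mul_le_mul_left h hw)
    _ = 2 * M := by ring

end IsGammaSolution

section GammaMeasure

open ProbabilityTheory

variable {α β c : ℝ} {y : ℝ → ℝ}

lemma integral_gammaMeasure_eq_gammaWeight (hα : 0 < α) (hβ : 0 < β) (f : ℝ → ℝ) :
    ∫ x, f x ∂gammaMeasure α β =
      β ^ α / Gamma α * ∫ x in Set.Ioi 0, gammaWeight (α - 1) β x * f x := by
  rw [gammaMeasure, integral_withDensity_eq_integral_toReal_smul (f := gammaPDF α β)
    (measurable_gammaPDFReal _ _).ennreal_ofReal (ae_of_all _ fun _ => ENNReal.ofReal_lt_top),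
    ← integral_const_mul, ← integral_indicator measurableSet_Ioi]
  refine integral_congr_ae ?_
  filter_upwards [Measure.ae_ne volume (0 : ℝ)] with x hx
  rcases hx.lt_or_gt with hx | hx
  · simp [gammaPDF_of_neg hx, hx.le]
  · rw [Set.indicator_of_mem (Set.mem_Ioi.2 hx), gammaPDF,
      ENNReal.toReal_ofReal (gammaPDFReal_nonneg hα hβ _), gammaPDFReal, if_pos hx.le,
      smul_eq_mul, gammaWeight]
    ring

lemma integral_gammaWeight_mul_sub_mean (hα : 0 < α) (hβ : 0 < β)
    (hyc : ContinuousOn y (Set.Ioi 0)) (hy : ∀ x, 0 < x → |y x| ≤ c * (1 + x)) :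
    ∫ x in Set.Ioi 0, gammaWeight (α - 1) β x * (y x - ∫ x, y x ∂gammaMeasure α β) = 0 := by
  have := isProbabilityMeasure_gammaMeasure hα hβ
  have hone := integral_gammaMeasure_eq_gammaWeight hα hβ fun _ => 1
  have hmean := integral_gammaMeasure_eq_gammaWeight hα hβ y
  rw [integral_const, probReal_univ, one_smul] at hone
  simp only [mul_one] at hone
  simp only [mul_sub]
  rw [integral_sub (integrableOn_gammaWeight_mul (by linarith) hβ hyc hy)
    ((integrableOn_gammaWeight (by linarith) hβ).mul_const _), integral_mul_const]
  refine mul_left_cancel₀ (left_ne_zero_of_mul (hone ▸ one_ne_zero)) ?_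
  linear_combination (∫ x, y x ∂gammaMeasure α β) * hone - hmean

lemma exists_isGammaPrimitive_sub_mean (hα : 0 < α) (hβ : 0 < β)
    (hyc : ContinuousOn y (Set.Ioi 0)) (hy : ∀ x, 0 < x → |y x| ≤ c * (1 + x)) :
    ∃ v, IsGammaPrimitive α β (fun x => y x - ∫ x, y x ∂gammaMeasure α β) v := by
  have hmean := integral_gammaWeight_mul_sub_mean hα hβ hyc hy
  set m := ∫ x, y x ∂gammaMeasure α β
  set f := fun x => gammaWeight (α - 1) β x * (y x - m)
  have hfc : ContinuousOn f (Set.Ioi 0) :=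
    (continuousOn_gammaWeight _ β).mul (hyc.sub continuousOn_const)
  have hf : IntegrableOn f (Set.Ioi 0) := by
    refine integrableOn_gammaWeight_mul (c := c + |m|) (by linarith) hβ
      (hyc.sub continuousOn_const) fun x hx => ?_
    nlinarith [abs_sub (y x) m, hy x hx, mul_nonneg (abs_nonneg m) hx.le]
  have hfi : ∀ x, 0 ≤ x → IntervalIntegrable f volume 0 x := fun x hx => by
    rw [intervalIntegrable_iff_integrableOn_Ioc_of_le hx]
    exact hf.mono_set Set.Ioc_subset_Ioi_self
  refine ⟨fun x => ∫ t in (0 : ℝ)..x, f t, fun x hx => ?_, ?_, ?_⟩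
  · exact intervalIntegral.integral_hasDerivAt_right (hfi x hx.le)
      (hfc.stronglyMeasurableAtFilter isOpen_Ioi x hx) (hfc.continuousAt (Ioi_mem_nhds hx))
  · have hcont := intervalIntegral.continuousWithinAt_primitive (f := f) (μ := volume) (a := 0)
      (b₀ := 0) (b₁ := 0) (b₂ := 1) (measure_singleton _) (by simpa using hfi 1 zero_le_one)
    have hzero := hcont.tendsto
    rw [intervalIntegral.integral_same] at hzero
    refine hzero.mono_left ?_
    rw [← nhdsWithin_Ioc_eq_nhdsGT (zero_lt_one' ℝ)]
    exact nhdsWithin_mono _ Set.Ioc_subset_Icc_self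
  · have hlim := intervalIntegral_tendsto_integral_Ioi 0 hf tendsto_id
    rwa [hmean] at hlim

end GammaMeasure

lemma tendsto_mul_nhdsGT_zero_of_abs_le {f : ℝ → ℝ} {A : ℝ} (hf : ∀ x, 0 < x → |f x| ≤ A) :
    Tendsto (fun x => x * f x) (𝓝[>] 0) (𝓝 0) := by
  have hbound : Tendsto (fun x : ℝ => x * A) (𝓝[>] 0) (𝓝 0) := by
    simpa using (continuous_mul_const A).tendsto' 0 _ (zero_mul A) |>.mono_left nhdsWithin_le_nhds
  refine squeeze_zero_norm' (eventually_mem_nhdsWithin.mono fun x (hx : 0 < x) => ?_) hbound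
  rw [norm_mul, norm_of_nonneg hx.le]
  exact mul_le_mul_of_nonneg_left (hf x hx) hx.le

lemma IsGammaSolution.continuousWithinAt_zero {α β A : ℝ} {K k k' : ℝ → ℝ}
    (hk : IsGammaSolution α β K k k') (hα : 0 < α) (hK : ContinuousWithinAt K (Set.Ici 0) 0)
    (h0 : α * k 0 = K 0) (hA : ∀ x, 0 < x → |k' x| ≤ A) :
    ContinuousWithinAt k (Set.Ici 0) 0 := by
  rw [← Set.Ioi_insert, continuousWithinAt_insert_self] at hK ⊢
  have hlin : Tendsto (fun x => α - β * x) (𝓝[>] 0) (𝓝 α) :=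
    (Continuous.tendsto' (by fun_prop) 0 α (by simp)).mono_left nhdsWithin_le_nhds
  have hlim := (hK.tendsto.sub (tendsto_mul_nhdsGT_zero_of_abs_le hA)).div hlin hα.ne'
  rw [sub_zero, ← h0, mul_div_cancel_left₀ _ hα.ne'] at hlim
  refine Tendsto.congr' ?_ hlim
  filter_upwards [eventually_mem_nhdsWithin, hlin.eventually_ne hα.ne'] with x hx hne
  rw [Pi.div_apply, ← hk.equation x hx, add_sub_cancel_left, mul_div_cancel_left₀ _ hne]

/-- The regularity of solutions of the Gamma Stein equation: `g` is continuous on `[0, ∞)` and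
three times differentiable on `(0, ∞)`, with successive derivatives `g'`, `g''`, `g'''` such that
`g'`, `g''` and `x * g''' x` are bounded. The third derivative itself may blow up at `0`. -/
structure IsSteinRegular (g g' g'' g''' : ℝ → ℝ) (A₁ A₂ A₃ : ℝ) : Prop where
  continuousOn : ContinuousOn g (Set.Ici 0)
  hasDerivAt : ∀ x, 0 < x → HasDerivAt g (g' x) x
  hasDerivAt_deriv : ∀ x, 0 < x → HasDerivAt g' (g'' x) x
  hasDerivAt_deriv2 : ∀ x, 0 < x → HasDerivAt g'' (g''' x) x
  abs_deriv_le : ∀ x, 0 < x → |g' x| ≤ A₁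
  abs_deriv2_le : ∀ x, 0 < x → |g'' x| ≤ A₂
  abs_mul_deriv3_le : ∀ x, 0 < x → |x * g''' x| ≤ A₃

section SteinSolution

open ProbabilityTheory

variable {α β C₁ C₂ : ℝ} {h h' h'' H g g' : ℝ → ℝ}

lemma abs_sub_le_of_abs_deriv_le_Ici (hc : ContinuousOn h (Set.Ici 0))
    (hd : ∀ x, 0 < x → HasDerivAt h (h' x) x) (hC : ∀ x, 0 < x → |h' x| ≤ C₁) {s t : ℝ}
    (hs : 0 ≤ s) (hst : s ≤ t) : |h t - h s| ≤ C₁ * (t - s) :=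
  abs_sub_le_of_abs_hasDerivAt_le hst (hc.mono fun _ hx => hs.trans hx.1)
    (fun x hx => hd x (hs.trans_lt hx.1)) fun x hx => hC x (hs.trans_lt hx.1)

lemma abs_le_linear_of_abs_deriv_le (hc : ContinuousOn h (Set.Ici 0))
    (hd : ∀ x, 0 < x → HasDerivAt h (h' x) x) (hC : ∀ x, 0 < x → |h' x| ≤ C₁) {x : ℝ}
    (hx : 0 < x) : |h x| ≤ (|h 0| + C₁) * (1 + x) := by
  have hC0 : 0 ≤ C₁ := (abs_nonneg _).trans (hC x hx)
  have hmvt := abs_sub_le_of_abs_deriv_le_Ici hc hd hC le_rfl hx.le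
  nlinarith [abs_sub_abs_le_abs_sub (h x) (h 0), mul_nonneg (abs_nonneg (h 0)) hx.le]

lemma IsGammaSolution.exists_isSteinRegular (hg : IsGammaSolution α β H g g') (hα : 0 < α)
    (hβ : 0 < β) (hc : ContinuousOn H (Set.Ici 0)) (hd : ∀ x, 0 < x → HasDerivAt H (h' x) x)
    (hd' : ∀ x, 0 < x → HasDerivAt h' (h'' x) x) (hC₁ : ∀ x, 0 < x → |h' x| ≤ C₁)
    (hC₂ : ∀ x, 0 < x → |h'' x| ≤ C₂) (hg₀ : α * g 0 = H 0) (hgC : ∀ x, 0 < x → |g x| ≤ C₁ / β) :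
    ∃ g'' g''', IsSteinRegular g g' g'' g''' (3.44 * C₁) (1.72 * (C₂ + 6.88 * β * C₁))
      (2 * (C₂ + 6.88 * β * C₁)) := by
  have hsol' := hg.deriv hd
  have hsol'' := hsol'.deriv fun x hx => (hd' x hx).add ((hg.hasDerivAt x hx).const_mul β)
  have hrhs' : ∀ x, 0 < x → |h' x + β * g x| ≤ 2 * C₁ := fun x hx => by
    have hβg : |β * g x| ≤ C₁ := by
      rw [abs_mul, abs_of_pos hβ, mul_comm]
      exact (le_div_iff₀ hβ).1 (hgC x hx)
    linarith [abs_add_le (h' x) (β * g x), hC₁ x hx]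
  have hA₁ : ∀ x, 0 < x → |g' x| ≤ 3.44 * C₁ := fun x hx => by
    refine (hsol'.abs_le (by linarith) hβ (fun x hx => hg.abs_mul_deriv_le_growth hα.le hβ.le
      (hgC x hx) (abs_le_linear_of_abs_deriv_le hc hd hC₁ hx) hx) hrhs' hx).trans_eq ?_
    ring
  have hrhs'' : ∀ x, 0 < x → |h'' x + β * g' x + β * g' x| ≤ C₂ + 6.88 * β * C₁ := fun x hx => by
    have hβg' : |β * g' x| ≤ β * (3.44 * C₁) := by
      rw [abs_mul, abs_of_pos hβ]
      exact mul_le_mul_of_nonneg_left (hA₁ x hx) hβ.le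
    linarith [abs_add_three (h'' x) (β * g' x) (β * g' x), hC₂ x hx]
  have hgrowth'' := fun x (hx : 0 < x) => hsol'.abs_mul_deriv_le_growth (c := 2 * C₁)
    (by linarith) hβ.le (hA₁ x hx) (by nlinarith [hrhs' x hx, abs_nonneg (h' x), hC₁ x hx]) hx
  refine ⟨_, _, fun x hx => ?_, hg.hasDerivAt, hsol'.hasDerivAt, hsol''.hasDerivAt, hA₁,
    fun x hx => hsol''.abs_le (by linarith) hβ hgrowth'' hrhs'' hx,
    fun x hx => hsol''.abs_mul_deriv_le (by linarith) hβ hgrowth'' hrhs'' hx⟩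
  rcases (Set.mem_Ici.1 hx).eq_or_lt with rfl | hx
  · exact hg.continuousWithinAt_zero hα (hc 0 hx) hg₀ hA₁
  · exact (hg.hasDerivAt x hx).continuousAt.continuousWithinAt

theorem exists_gamma_stein_solution (hα : 0 < α) (hβ : 0 < β) (hc : ContinuousOn h (Set.Ici 0))
    (hd : ∀ x, 0 < x → HasDerivAt h (h' x) x) (hd' : ∀ x, 0 < x → HasDerivAt h' (h'' x) x)
    (hC₁ : ∀ x, 0 < x → |h' x| ≤ C₁) (hC₂ : ∀ x, 0 < x → |h'' x| ≤ C₂) :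
    ∃ g g' g'' g''', IsSteinRegular g g' g'' g''' (3.44 * C₁) (1.72 * (C₂ + 6.88 * β * C₁))
        (2 * (C₂ + 6.88 * β * C₁)) ∧
      ∀ x, 0 ≤ x → x * g' x + (α - β * x) * g x = h x - ∫ x, h x ∂gammaMeasure α β := by
  obtain ⟨v, hv⟩ := exists_isGammaPrimitive_sub_mean hα hβ (hc.mono Set.Ioi_subset_Ici_self)
    fun x hx => abs_le_linear_of_abs_deriv_le hc hd hC₁ hx
  set H := fun x => h x - ∫ x, h x ∂gammaMeasure α β
  set g := Function.update (fun x => v x / gammaWeight α β x) 0 (H 0 / α)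
  have hgv : ∀ x, 0 < x → g x = v x / gammaWeight α β x :=
    fun x hx => Function.update_of_ne hx.ne' _ _
  have hg₀ : α * g 0 = H 0 := by
    simp only [g, Function.update_self]
    field_simp
  have hgC : ∀ x, 0 < x → |g x| ≤ C₁ / β := fun x hx => by
    have hw := gammaWeight_pos α β hx
    rw [hgv x hx, abs_div, abs_of_pos hw, div_le_iff₀ hw]
    refine hv.abs_le_of_lipschitz hα hβ (fun s t hs hst => ?_) hx
    rw [sub_sub_sub_cancel_right]
    exact abs_sub_le_of_abs_deriv_le_Ici hc hd hC₁ hs.le hst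
  have hsol := hv.isGammaSolution hgv
  obtain ⟨g'', g''', hreg⟩ := hsol.exists_isSteinRegular hα hβ (hc.sub continuousOn_const)
    (fun x hx => (hd x hx).sub_const _) hd' hC₁ hC₂ hg₀ hgC
  refine ⟨g, _, g'', g''', hreg, fun x hx => ?_⟩
  rcases hx.eq_or_lt with rfl | hx
  · simpa using hg₀
  · exact hsol.equation x hx

end SteinSolution

section SymmetricTaylor

variable {φ φ' φ'' φ''' : ℝ → ℝ} {m d : ℝ}

lemma abs_symm_second_difference_le {M : ℝ} (hd : 0 ≤ d)
    (hφ : ContinuousOn φ (Set.Icc (m - d) (m + d)))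
    (hφ' : ∀ x ∈ Set.Ioo (m - d) (m + d), HasDerivAt φ (φ' x) x)
    (hφ'' : ∀ x ∈ Set.Ioo (m - d) (m + d), HasDerivAt φ' (φ'' x) x)
    (hM : ∀ x ∈ Set.Ioo (m - d) (m + d), |φ'' x| ≤ M) :
    |φ (m + d) + φ (m - d) - 2 * φ m| ≤ M * d ^ 2 := by
  refine image_norm_le_of_norm_deriv_right_le_deriv_boundary
    (f := fun t => φ (m + t) + φ (m - t) - 2 * φ m) (a := 0) (b := d)
    (f' := fun t => φ' (m + t) + -φ' (m - t)) (B := fun t => M * t ^ 2)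
    (B' := fun t => M * (2 * t)) ?_ (fun t ht => ?_) (by simp; ring_nf)
    (fun t => by simpa using ((hasDerivAt_id t).pow 2).const_mul M) (fun t ht => ?_) ⟨hd, le_rfl⟩
  · refine (ContinuousOn.add ?_ ?_).sub continuousOn_const <;>
    exact hφ.comp (by fun_prop) fun t ht => by constructor <;> linarith [ht.1, ht.2]
  · have hright := (hφ' (m + t) ⟨by linarith [ht.1, ht.2], by linarith [ht.2]⟩).comp_const_add m t
    have hleft := (hφ' (m - t) ⟨by linarith [ht.2], by linarith [ht.1, ht.2]⟩).comp_const_sub m t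
    exact ((hright.add hleft).sub_const _).hasDerivWithinAt
  · have hsub : Set.Icc (m - t) (m + t) ⊆ Set.Ioo (m - d) (m + d) := fun x hx =>
      ⟨by linarith [hx.1, ht.2], by linarith [hx.2, ht.2]⟩
    have hsub' := Set.Ioo_subset_Icc_self.trans hsub
    rw [← sub_eq_add_neg]
    refine (abs_sub_le_of_abs_hasDerivAt_le (by linarith [ht.1])
      (fun x hx => (hφ'' x (hsub hx)).continuousAt.continuousWithinAt)
      (fun x hx => hφ'' x (hsub' hx)) (fun x hx => hM x (hsub' hx))).trans_eq ?_
    ring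

/-- The error of the symmetric difference of `φ` of half-width `d` at `m`, as an approximation to
`2 * d * φ' m`. -/
def centralDiffError (φ φ' : ℝ → ℝ) (m d : ℝ) : ℝ := φ (m + d) - φ (m - d) - 2 * d * φ' m

lemma centralDiffError_neg (φ φ' : ℝ → ℝ) (m d : ℝ) :
    centralDiffError φ φ' m (-d) = -centralDiffError φ φ' m d := by
  unfold centralDiffError
  rw [← sub_eq_add_neg, sub_neg_eq_add]
  ring

lemma abs_centralDiffError_le_of_abs_le_deriv {B B' : ℝ → ℝ} (hd : 0 ≤ d)
    (hφ : ContinuousOn φ (Set.Icc (m - d) (m + d)))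
    (hφ' : ∀ x ∈ Set.Ioo (m - d) (m + d), HasDerivAt φ (φ' x) x)
    (hB₀ : B 0 = 0) (hB : ∀ t, HasDerivAt B (B' t) t)
    (hle : ∀ t ∈ Set.Ico 0 d, |φ' (m + t) + φ' (m - t) - 2 * φ' m| ≤ B' t) :
    |centralDiffError φ φ' m d| ≤ B d := by
  refine image_norm_le_of_norm_deriv_right_le_deriv_boundary
    (f := fun t => φ (m + t) - φ (m - t) - 2 * t * φ' m) (a := 0) (b := d)
    (f' := fun t => φ' (m + t) - -φ' (m - t) - 2 * φ' m) ?_ (fun t ht => ?_) (by simp [hB₀])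
    hB (fun t ht => by rw [sub_neg_eq_add]; exact hle t ht) ⟨hd, le_rfl⟩
  · refine (ContinuousOn.sub ?_ ?_).sub (by fun_prop) <;>
    exact hφ.comp (by fun_prop) fun t ht => by constructor <;> linarith [ht.1, ht.2]
  · have hright := (hφ' (m + t) ⟨by linarith [ht.1, ht.2], by linarith [ht.2]⟩).comp_const_add m t
    have hleft := (hφ' (m - t) ⟨by linarith [ht.2], by linarith [ht.1, ht.2]⟩).comp_const_sub m t
    have hlin : HasDerivAt (fun t : ℝ => 2 * t * φ' m) (2 * φ' m) t := by
      simpa using ((hasDerivAt_id t).const_mul 2).mul_const (φ' m)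
    exact ((hright.sub hleft).sub hlin).hasDerivWithinAt

lemma abs_centralDiffError_le_of_abs_deriv_le {A : ℝ} (hd : 0 ≤ d)
    (hφ : ContinuousOn φ (Set.Icc (m - d) (m + d)))
    (hφ' : ∀ x ∈ Set.Ioo (m - d) (m + d), HasDerivAt φ (φ' x) x)
    (hA : ∀ x ∈ Set.Ioo (m - d) (m + d), |φ' x| ≤ A) :
    |centralDiffError φ φ' m d| ≤ 4 * A * d := by
  refine abs_centralDiffError_le_of_abs_le_deriv (B := fun t => 4 * A * t) (B' := fun _ => 4 * A)
    hd hφ hφ' (by simp) (fun t => by simpa using (hasDerivAt_id t).const_mul (4 * A))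
    fun t ⟨ht₀, htd⟩ => ?_
  have hright := abs_le.1 (hA (m + t) ⟨by linarith, by linarith⟩)
  have hleft := abs_le.1 (hA (m - t) ⟨by linarith, by linarith⟩)
  have hmid := abs_le.1 (hA m ⟨by linarith, by linarith⟩)
  rw [abs_le]
  constructor <;> linarith

lemma abs_centralDiffError_le_of_abs_deriv3_le {N : ℝ} (hd : 0 ≤ d)
    (hφ : ContinuousOn φ (Set.Icc (m - d) (m + d)))
    (hφ' : ∀ x ∈ Set.Ioo (m - d) (m + d), HasDerivAt φ (φ' x) x)
    (hφ'' : ∀ x ∈ Set.Ioo (m - d) (m + d), HasDerivAt φ' (φ'' x) x)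
    (hφ''' : ∀ x ∈ Set.Ioo (m - d) (m + d), HasDerivAt φ'' (φ''' x) x)
    (hN : ∀ x ∈ Set.Ioo (m - d) (m + d), |φ''' x| ≤ N) :
    |centralDiffError φ φ' m d| ≤ N / 3 * d ^ 3 := by
  refine abs_centralDiffError_le_of_abs_le_deriv (B := fun t => N / 3 * t ^ 3)
    (B' := fun t => N * t ^ 2) hd hφ hφ' (by simp)
    (fun t => (((hasDerivAt_id t).pow 3).const_mul (N / 3)).congr_deriv (by simp; ring))
    fun t ht => ?_
  have hsub : Set.Icc (m - t) (m + t) ⊆ Set.Ioo (m - d) (m + d) := fun x hx =>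
    ⟨by linarith [hx.1, ht.2], by linarith [hx.2, ht.2]⟩
  have hsub' := Set.Ioo_subset_Icc_self.trans hsub
  exact abs_symm_second_difference_le ht.1
    (fun x hx => (hφ'' x (hsub hx)).continuousAt.continuousWithinAt)
    (fun x hx => hφ'' x (hsub' hx)) (fun x hx => hφ''' x (hsub' hx)) fun x hx => hN x (hsub' hx)

end SymmetricTaylor

namespace IsSteinRegular

variable {g g' g'' g''' : ℝ → ℝ} {A₁ A₂ A₃ T d y : ℝ}

lemma continuousOn_mul_deriv (hg : IsSteinRegular g g' g'' g''' A₁ A₂ A₃) :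
    ContinuousOn (fun x => x * g' x) (Set.Ici 0) := by
  intro x hx
  rcases (Set.mem_Ici.1 hx).eq_or_lt with rfl | hx
  · rw [← Set.Ioi_insert, continuousWithinAt_insert_self, ContinuousWithinAt, zero_mul]
    exact tendsto_mul_nhdsGT_zero_of_abs_le hg.abs_deriv_le
  · exact (continuousAt_id.mul (hg.hasDerivAt_deriv x hx).continuousAt).continuousWithinAt

lemma abs_symm_second_difference_mul_deriv_le (hg : IsSteinRegular g g' g'' g''' A₁ A₂ A₃)
    (hd : |d| ≤ T) :
    |(T + d) * g' (T + d) + (T - d) * g' (T - d) - 2 * (T * g' T)| ≤ (2 * A₂ + A₃) * d ^ 2 := by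
  wlog hd₀ : 0 ≤ d generalizing d
  · have h := this (d := -d) (by rwa [abs_neg]) (by linarith)
    rwa [neg_sq, ← sub_eq_add_neg, sub_neg_eq_add, add_comm (_ * _)] at h
  rw [abs_of_nonneg hd₀] at hd
  have hpos : ∀ x ∈ Set.Ioo (T - d) (T + d), 0 < x := fun x hx => by linarith [hx.1]
  refine abs_symm_second_difference_le (φ := fun x => x * g' x) (φ' := fun x => g' x + x * g'' x)
    (φ'' := fun x => 2 * g'' x + x * g''' x) hd₀
    (hg.continuousOn_mul_deriv.mono fun x hx => (sub_nonneg.2 hd).trans hx.1)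
    (fun x hx => ?_) (fun x hx => ?_) fun x hx => ?_
  · exact ((hasDerivAt_id x).mul (hg.hasDerivAt_deriv x (hpos x hx))).congr_deriv (by simp)
  · refine ((hg.hasDerivAt_deriv x (hpos x hx)).add
      ((hasDerivAt_id x).mul (hg.hasDerivAt_deriv2 x (hpos x hx)))).congr_deriv ?_
    simp only [id]
    ring
  · calc |2 * g'' x + x * g''' x| ≤ 2 * |g'' x| + |x * g''' x| := by
          rw [← abs_two, ← abs_mul, abs_two]; exact abs_add_le _ _
      _ ≤ 2 * A₂ + A₃ := by
          linarith [hg.abs_deriv2_le x (hpos x hx), hg.abs_mul_deriv3_le x (hpos x hx)]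

lemma abs_centralDiffError_le (hg : IsSteinRegular g g' g'' g''' A₁ A₂ A₃) (hd : |d| ≤ T) :
    |centralDiffError g g' T d| ≤ 4 * A₁ * |d| := by
  wlog hd₀ : 0 ≤ d generalizing d
  · simpa [centralDiffError_neg] using this (d := -d) (by rwa [abs_neg]) (by linarith)
  rw [abs_of_nonneg hd₀] at hd ⊢
  have hpos : ∀ x ∈ Set.Ioo (T - d) (T + d), 0 < x := fun x hx => by linarith [hx.1]
  exact abs_centralDiffError_le_of_abs_deriv_le hd₀
    (hg.continuousOn.mono fun x hx => (sub_nonneg.2 hd).trans hx.1)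
    (fun x hx => hg.hasDerivAt x (hpos x hx)) fun x hx => hg.abs_deriv_le x (hpos x hx)

lemma abs_centralDiffError_le_cube (hg : IsSteinRegular g g' g'' g''' A₁ A₂ A₃) (hy : 0 < y)
    (hd : |d| ≤ T - y) : |centralDiffError g g' T d| ≤ A₃ / (3 * y) * |d| ^ 3 := by
  wlog hd₀ : 0 ≤ d generalizing d
  · simpa [centralDiffError_neg] using this (d := -d) (by rwa [abs_neg]) (by linarith)
  rw [abs_of_nonneg hd₀] at hd ⊢
  have hyx : ∀ x ∈ Set.Icc (T - d) (T + d), y ≤ x := fun x hx => by linarith [hx.1]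
  have hyx' : ∀ x ∈ Set.Ioo (T - d) (T + d), y ≤ x := fun x hx =>
    hyx x (Set.Ioo_subset_Icc_self hx)
  have hpos : ∀ x ∈ Set.Ioo (T - d) (T + d), 0 < x := fun x hx => hy.trans_le (hyx' x hx)
  rw [mul_comm 3, ← div_div]
  refine abs_centralDiffError_le_of_abs_deriv3_le hd₀
    (hg.continuousOn.mono fun x hx => hy.le.trans (hyx x hx))
    (fun x hx => hg.hasDerivAt x (hpos x hx)) (fun x hx => hg.hasDerivAt_deriv x (hpos x hx))
    (fun x hx => hg.hasDerivAt_deriv2 x (hpos x hx)) fun x hx => (le_div_iff₀ hy).2 ?_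
  calc |g''' x| * y ≤ |g''' x| * x := by gcongr; exact hyx' x hx
    _ = |x * g''' x| := by rw [abs_mul, abs_of_pos (hpos x hx), mul_comm]
    _ ≤ A₃ := hg.abs_mul_deriv3_le x (hpos x hx)

end IsSteinRegular

section SymmetricIncrement

variable {G : Type*} [Fintype G] {D : G → ℝ}

lemma abs_expect_le_of_symm (hsymm : ∀ f : ℝ → ℝ, 𝔼 s, f (D s) = 𝔼 s, f (-D s)) (f : ℝ → ℝ)
    {B : G → ℝ} (hB : ∀ s, |f (D s) + f (-D s)| ≤ 2 * B s) : |𝔼 s, f (D s)| ≤ 𝔼 s, B s := by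
  have hdouble : 2 * |𝔼 s, f (D s)| = |𝔼 s, (f (D s) + f (-D s))| := by
    rw [expect_add_distrib, ← hsymm f, ← two_mul, abs_mul, abs_two]
  have hle : |𝔼 s, (f (D s) + f (-D s))| ≤ 2 * 𝔼 s, B s := by
    rw [mul_expect]
    exact (abs_expect_le _ _).trans (expect_le_expect fun s _ => hB s)
  linarith

lemma abs_expect_mul_comp_add_sub_le (hsymm : ∀ f : ℝ → ℝ, 𝔼 s, f (D s) = 𝔼 s, f (-D s))
    (g g' : ℝ → ℝ) (T : ℝ) :
    |𝔼 s, D s * g (T + D s) - (𝔼 s, D s ^ 2) * g' T| ≤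
      1 / 2 * 𝔼 s, |D s| * |centralDiffError g g' T (D s)| := by
  rw [expect_mul, ← expect_sub_distrib, mul_expect]
  refine abs_expect_le_of_symm hsymm (fun d => d * g (T + d) - d ^ 2 * g' T) fun s => ?_
  rw [← abs_mul, centralDiffError, ← sub_eq_add_neg]
  ring_nf
  rfl

end SymmetricIncrement

namespace IsSteinRegular

variable {g g' g'' g''' : ℝ → ℝ} {A₁ A₂ A₃ a e ν q T : ℝ} {G : Type*} [Fintype G] {D : G → ℝ}

lemma abs_expect_mul_deriv_sub_le [Nonempty G] (hg : IsSteinRegular g g' g'' g''' A₁ A₂ A₃)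
    (hsymm : ∀ f : ℝ → ℝ, 𝔼 s, f (D s) = 𝔼 s, f (-D s)) (hD : ∀ s, |D s| ≤ T) :
    |𝔼 s, (T + D s) * g' (T + D s) - T * g' T| ≤ (A₂ + A₃ / 2) * 𝔼 s, D s ^ 2 := by
  rw [← Fintype.expect_const (ι := G) (T * g' T), ← expect_sub_distrib, mul_expect]
  refine abs_expect_le_of_symm hsymm (fun d => (T + d) * g' (T + d) - T * g' T) fun s => ?_
  convert hg.abs_symm_second_difference_mul_deriv_le (hD s) using 1
  · rw [← sub_eq_add_neg]
    ring_nf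
  · ring

lemma expect_centralDiffError_le (hg : IsSteinRegular g g' g'' g''' A₁ A₂ A₃) (ha : 0 ≤ a)
    (he : 0 < e) (hν : 0 ≤ ν) (hq : 0 ≤ q) (hD : ∀ s, D s ^ 2 ≤ 4 * a * e)
    (hD₂ : 𝔼 s, D s ^ 2 = 4 * a * ν) (hD₄ : 𝔼 s, D s ^ 4 ≤ 16 * q * a ^ 2 * ν ^ 2) :
    𝔼 s, |D s| * |centralDiffError g g' (a + e) (D s)| ≤
      144 * A₁ * e * ν + 12 * q * A₃ * a * ν ^ 2 := by
  have hA₁ : 0 ≤ A₁ := (abs_nonneg _).trans (hg.abs_deriv_le 1 one_pos)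
  have hA₃ : 0 ≤ A₃ := (abs_nonneg _).trans (hg.abs_mul_deriv3_le 1 one_pos)
  rcases lt_or_ge a (9 * e) with hae | hae
  · calc 𝔼 s, |D s| * |centralDiffError g g' (a + e) (D s)|
        ≤ 𝔼 s, 4 * A₁ * D s ^ 2 := by
          refine expect_le_expect fun s _ => ?_
          rw [← sq_abs (D s), sq, mul_left_comm]
          gcongr
          exact hg.abs_centralDiffError_le (abs_le_of_sq_le_sq
            (by nlinarith [hD s, sq_nonneg (a - e)]) (by linarith))
      _ = 16 * A₁ * a * ν := by rw [← mul_expect, hD₂]; ring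
      _ ≤ 16 * A₁ * (9 * e) * ν := by gcongr
      _ ≤ _ := by linarith [show 0 ≤ 12 * q * A₃ * a * ν ^ 2 by positivity]
  · have ha' : 0 < a := by linarith
    have hDle : ∀ s, |D s| ≤ a + e - 4 * a / 9 := fun s =>
      abs_le_of_sq_le_sq (by nlinarith [hD s]) (by linarith)
    calc 𝔼 s, |D s| * |centralDiffError g g' (a + e) (D s)|
        ≤ 𝔼 s, 3 * A₃ / (4 * a) * D s ^ 4 := by
          refine expect_le_expect fun s _ => ?_
          calc |D s| * |centralDiffError g g' (a + e) (D s)|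
              ≤ |D s| * (A₃ / (3 * (4 * a / 9)) * |D s| ^ 3) := by
                gcongr
                exact hg.abs_centralDiffError_le_cube (by positivity) (hDle s)
            _ = 3 * A₃ / (4 * a) * D s ^ 4 := by
                rw [← Even.pow_abs (by decide : Even 4) (D s)]
                field_simp
                ring
      _ ≤ 3 * A₃ / (4 * a) * (16 * q * a ^ 2 * ν ^ 2) := by rw [← mul_expect]; gcongr
      _ = 12 * q * A₃ * a * ν ^ 2 := by field_simp; ring
      _ ≤ _ := le_add_of_nonneg_left (by positivity)

theorem abs_expect_stein_step_le [Nonempty G] (hg : IsSteinRegular g g' g'' g''' A₁ A₂ A₃)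
    (ha : 0 ≤ a) (he : 0 < e) (hν : 0 ≤ ν) (hq : 0 ≤ q)
    (hsymm : ∀ f : ℝ → ℝ, 𝔼 s, f (D s) = 𝔼 s, f (-D s)) (hD : ∀ s, D s ^ 2 ≤ 4 * a * e)
    (hD₂ : 𝔼 s, D s ^ 2 = 4 * a * ν) (hD₄ : 𝔼 s, D s ^ 4 ≤ 16 * q * a ^ 2 * ν ^ 2) :
    |𝔼 s, (ν * ((a + e + D s) * g' (a + e + D s)) - 1 / 4 * (D s * g (a + e + D s)))| ≤
      19 * A₁ * e * ν + (4 * A₂ + (2 + 3 / 2 * q) * A₃) * a * ν ^ 2 := by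
  have hDle : ∀ s, |D s| ≤ a + e := fun s =>
    abs_le_of_sq_le_sq (by nlinarith [hD s, sq_nonneg (a - e)]) (by linarith)
  have hdiff := hg.abs_expect_mul_deriv_sub_le hsymm hDle
  have hcov := (abs_expect_mul_comp_add_sub_le hsymm g g' (a + e)).trans
    (mul_le_mul_of_nonneg_left (hg.expect_centralDiffError_le ha he hν hq hD hD₂ hD₄) (by norm_num))
  have hmid := hg.abs_deriv_le (a + e) (by linarith)
  rw [hD₂] at hdiff hcov
  rw [expect_sub_distrib, ← mul_expect, ← mul_expect]
  set P := 𝔼 s, (a + e + D s) * g' (a + e + D s)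
  set Q := 𝔼 s, D s * g (a + e + D s)
  calc |ν * P - 1 / 4 * Q|
      = |ν * (P - (a + e) * g' (a + e)) - 1 / 4 * (Q - 4 * a * ν * g' (a + e)) +
          ν * e * g' (a + e)| := by ring_nf
    _ ≤ ν * |P - (a + e) * g' (a + e)| + 1 / 4 * |Q - 4 * a * ν * g' (a + e)| +
          ν * e * |g' (a + e)| := by
        refine (abs_add_le _ _).trans (add_le_add ((abs_sub _ _).trans_eq ?_) (le_of_eq ?_)) <;>
        simp only [abs_mul, abs_of_nonneg hν, abs_of_pos he]
        norm_num
    _ ≤ ν * ((A₂ + A₃ / 2) * (4 * a * ν)) +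
          1 / 4 * (1 / 2 * (144 * A₁ * e * ν + 12 * q * A₃ * a * ν ^ 2)) + ν * e * A₁ := by
        gcongr
    _ = _ := by ring

end IsSteinRegular

lemma expect_expect_update {N G : Type*} [Fintype N] [DecidableEq N] [Fintype G] [Nonempty G]
    (i : N) (Φ : (N → G) → ℝ) : 𝔼 ω, 𝔼 s, Φ (Function.update ω i s) = 𝔼 ω, Φ ω := by
  have hswap : Function.Involutive
      fun x : (N → G) × G => (Function.update x.1 i x.2, x.1 i) := fun x => by simp
  calc 𝔼 ω, 𝔼 s, Φ (Function.update ω i s)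
      = 𝔼 x : (N → G) × G, Φ (Function.update x.1 i x.2) := by
        rw [← univ_product_univ, expect_product]
    _ = 𝔼 x : (N → G) × G, Φ x.1 := Fintype.expect_equiv hswap.toPerm _ _ fun _ => rfl
    _ = 𝔼 ω, Φ ω := by
        rw [← univ_product_univ, expect_product]
        exact expect_congr rfl fun ω _ => Fintype.expect_const (Φ ω)

section LeaveOneOut

variable {N G ι : Type*} [Fintype N] [DecidableEq N] {u : G → ι → ℝ}

/-- The sum of the independent steps `u (ω i)` over all trials other than `i`. -/
def leaveOneOut (u : G → ι → ℝ) (i : N) (ω : N → G) (j : ι) : ℝ :=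
  ∑ k ∈ univ.erase i, u (ω k) j

lemma leaveOneOut_update (i : N) (ω : N → G) (s : G) :
    leaveOneOut u i (Function.update ω i s) = leaveOneOut u i ω := by
  funext j
  refine sum_congr rfl fun k hk => ?_
  rw [Function.update_of_ne (ne_of_mem_erase hk)]

lemma leaveOneOut_add (u : G → ι → ℝ) (i : N) (ω : N → G) (j : ι) :
    leaveOneOut u i ω j + u (ω i) j = ∑ k, u (ω k) j :=
  sum_erase_add _ _ (mem_univ i)

end LeaveOneOut

section IsotropicSteps

variable {G ι : Type*} [Fintype ι] {u : G → ι → ℝ}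

/-- Twice the inner product of the step in direction `u s` with `w`, that is, the part of the change
of squared length from `w` to `w + u s` which depends on the direction of the step. -/
def increment (u : G → ι → ℝ) (w : ι → ℝ) (s : G) : ℝ := 2 * ∑ j, w j * u s j

/-- A step `u s`, with `s` uniformly distributed on `G`, that is symmetric, lies on the sphere of
squared radius `e` in the hyperplane of vectors with coordinate sum zero, and is isotropic in that
hyperplane up to fourth order: its covariance is `ν` times the identity there, and its fourth
moments are bounded by `q` times the squares of the second moments. -/
structure IsIsotropicStep [Fintype G] (u : G → ι → ℝ) (e ν q : ℝ) : Prop where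
  sum_eq_zero : ∀ s, ∑ j, u s j = 0
  sum_sq : ∀ s, ∑ j, u s j ^ 2 = e
  expect_symm : ∀ f : (ι → ℝ) → ℝ, 𝔼 s, f (u s) = 𝔼 s, f (-u s)
  expect_inner_sq : ∀ w : ι → ℝ, ∑ j, w j = 0 → 𝔼 s, (∑ j, w j * u s j) ^ 2 = ν * ∑ j, w j ^ 2
  expect_inner_pow_four_le : ∀ w : ι → ℝ, ∑ j, w j = 0 →
    𝔼 s, (∑ j, w j * u s j) ^ 4 ≤ q * ν ^ 2 * (∑ j, w j ^ 2) ^ 2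

lemma IsIsotropicStep.expect_increment_symm [Fintype G] {e ν q : ℝ}
    (hu : IsIsotropicStep u e ν q) (w : ι → ℝ) (f : ℝ → ℝ) :
    𝔼 s, f (increment u w s) = 𝔼 s, f (-increment u w s) := by
  simpa [increment] using hu.expect_symm fun x => f (2 * ∑ j, w j * x j)

variable {N : Type*} [Fintype N]

/-- The squared Euclidean length of the sum of the steps `u (ω i)` over all trials `i`. -/
def sumSqLength (u : G → ι → ℝ) (ω : N → G) : ℝ := ∑ j, (∑ i, u (ω i) j) ^ 2

variable [DecidableEq N]

namespace IsIsotropicStep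

variable [Fintype G] {e ν q A₁ A₂ A₃ : ℝ} {g g' g'' g''' : ℝ → ℝ}

lemma sum_leaveOneOut (hu : IsIsotropicStep u e ν q) (i : N) (ω : N → G) :
    ∑ j, leaveOneOut u i ω j = 0 := by
  unfold leaveOneOut
  rw [sum_comm]
  exact Finset.sum_eq_zero fun k _ => hu.sum_eq_zero _

lemma sumSqLength_eq (hu : IsIsotropicStep u e ν q) (i : N) (ω : N → G) :
    sumSqLength u ω =
      ∑ j, leaveOneOut u i ω j ^ 2 + e + increment u (leaveOneOut u i ω) (ω i) := by
  rw [increment, ← hu.sum_sq (ω i), mul_sum, ← sum_add_distrib, ← sum_add_distrib]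
  refine sum_congr rfl fun j _ => ?_
  rw [← leaveOneOut_add u i]
  ring

lemma sumSqLength_eq_sum_increment (hu : IsIsotropicStep u e ν q) (ω : N → G) :
    sumSqLength u ω =
      Fintype.card N * e + 1 / 2 * ∑ i, increment u (leaveOneOut u i ω) (ω i) := by
  calc sumSqLength u ω = ∑ i, ∑ j, (∑ k, u (ω k) j) * u (ω i) j := by
        rw [sum_comm]
        exact sum_congr rfl fun j _ => by rw [← mul_sum, sq]
    _ = ∑ i, (e + 1 / 2 * increment u (leaveOneOut u i ω) (ω i)) := by
        refine sum_congr rfl fun i _ => ?_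
        rw [increment, one_div, inv_mul_cancel_left₀ two_ne_zero, ← hu.sum_sq (ω i),
          ← sum_add_distrib]
        refine sum_congr rfl fun j _ => ?_
        rw [← leaveOneOut_add u i]
        ring
    _ = _ := by rw [sum_add_distrib, ← mul_sum, sum_const, card_univ, nsmul_eq_mul]

lemma expect_increment_leaveOneOut [Nonempty G] (hu : IsIsotropicStep u e ν q) (i : N) :
    𝔼 ω : N → G, increment u (leaveOneOut u i ω) (ω i) = 0 := by
  rw [← expect_expect_update i]
  refine expect_eq_zero fun ω _ => ?_
  simp only [leaveOneOut_update, Function.update_self]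
  have hneg := hu.expect_increment_symm (leaveOneOut u i ω) id
  simp only [id, expect_neg_distrib] at hneg
  linarith

lemma expect_sumSqLength [Nonempty G] (hu : IsIsotropicStep u e ν q) :
    𝔼 ω : N → G, sumSqLength u ω = Fintype.card N * e := by
  simp only [hu.sumSqLength_eq_sum_increment, expect_add_distrib, Fintype.expect_const,
    ← mul_expect, expect_sum_comm, hu.expect_increment_leaveOneOut, sum_const_zero, mul_zero,
    add_zero]

lemma expect_sum_leaveOneOut_sq [Nonempty G] (hu : IsIsotropicStep u e ν q) (i : N) :
    𝔼 ω : N → G, ∑ j, leaveOneOut u i ω j ^ 2 = (Fintype.card N - 1) * e := by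
  have h := hu.expect_sumSqLength (N := N)
  simp only [hu.sumSqLength_eq i, expect_add_distrib, Fintype.expect_const,
    hu.expect_increment_leaveOneOut] at h
  linarith

lemma abs_expect_increment_stein_le [Nonempty G] (hu : IsIsotropicStep u e ν q)
    (hg : IsSteinRegular g g' g'' g''' A₁ A₂ A₃) (he : 0 < e) (hν : 0 ≤ ν) (hq : 0 ≤ q)
    {w : ι → ℝ} (hw : ∑ j, w j = 0) {a : ℝ} (ha : ∑ j, w j ^ 2 = a) :
    |𝔼 s, (ν * ((a + e + increment u w s) * g' (a + e + increment u w s)) -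
        1 / 4 * (increment u w s * g (a + e + increment u w s)))| ≤
      19 * A₁ * e * ν + (4 * A₂ + (2 + 3 / 2 * q) * A₃) * a * ν ^ 2 := by
  subst ha
  refine hg.abs_expect_stein_step_le (sum_nonneg fun j _ => sq_nonneg (w j)) he hν hq
    (hu.expect_increment_symm w) (fun s => ?_) ?_ ?_
  · have hcauchy := sum_mul_sq_le_sq_mul_sq univ w (u s)
    rw [hu.sum_sq] at hcauchy
    rw [increment, mul_pow]
    linarith
  · simp only [increment, mul_pow, ← mul_expect, hu.expect_inner_sq w hw]
    ring
  · simp only [increment, mul_pow, ← mul_expect]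
    linarith [hu.expect_inner_pow_four_le w hw]

lemma abs_expect_stein_trial_le [Nonempty G] (hu : IsIsotropicStep u e ν q)
    (hg : IsSteinRegular g g' g'' g''' A₁ A₂ A₃) (he : 0 < e) (hν : 0 ≤ ν) (hq : 0 ≤ q) (i : N) :
    |𝔼 ω : N → G, (ν * (sumSqLength u ω * g' (sumSqLength u ω)) -
        1 / 4 * (increment u (leaveOneOut u i ω) (ω i) * g (sumSqLength u ω)))| ≤
      19 * A₁ * e * ν +
        (4 * A₂ + (2 + 3 / 2 * q) * A₃) * ((Fintype.card N - 1) * e) * ν ^ 2 := by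
  rw [← expect_expect_update i, ← hu.expect_sum_leaveOneOut_sq i, mul_expect, expect_mul,
    ← Fintype.expect_const (ι := N → G) (19 * A₁ * e * ν), ← expect_add_distrib]
  refine (abs_expect_le _ _).trans (expect_le_expect fun ω _ => ?_)
  simp only [hu.sumSqLength_eq i, leaveOneOut_update, Function.update_self]
  exact hu.abs_expect_increment_stein_le hg he hν hq (hu.sum_leaveOneOut i ω) rfl

theorem abs_expect_stein_sumSqLength_le [Nonempty G] (hu : IsIsotropicStep u e ν q)
    (hg : IsSteinRegular g g' g'' g''' A₁ A₂ A₃) (he : 0 < e) (hq : 0 ≤ q)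
    (hN : Fintype.card N * ν = 1) :
    |𝔼 ω : N → G, (sumSqLength u ω * g' (sumSqLength u ω) +
        (Fintype.card N * e / 2 - 1 / 2 * sumSqLength u ω) * g (sumSqLength u ω))| ≤
      e * (19 * A₁ + 4 * A₂ + (2 + 3 / 2 * q) * A₃) := by
  have hA₂ : 0 ≤ A₂ := (abs_nonneg _).trans (hg.abs_deriv2_le 1 one_pos)
  have hA₃ : 0 ≤ A₃ := (abs_nonneg _).trans (hg.abs_mul_deriv3_le 1 one_pos)
  have hν : 0 ≤ ν := (pos_of_mul_pos_right (hN ▸ one_pos) (Nat.cast_nonneg _)).le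
  have hsplit : ∀ ω : N → G, sumSqLength u ω * g' (sumSqLength u ω) +
      (Fintype.card N * e / 2 - 1 / 2 * sumSqLength u ω) * g (sumSqLength u ω) =
      ∑ i, (ν * (sumSqLength u ω * g' (sumSqLength u ω)) -
        1 / 4 * (increment u (leaveOneOut u i ω) (ω i) * g (sumSqLength u ω))) := by
    intro ω
    rw [sum_sub_distrib, sum_const, card_univ, nsmul_eq_mul, ← mul_sum, ← sum_mul]
    linear_combination (-(1 / 2) * g (sumSqLength u ω)) * hu.sumSqLength_eq_sum_increment ω -
      (sumSqLength u ω * g' (sumSqLength u ω)) * hN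
  simp only [hsplit, expect_sum_comm]
  calc _ ≤ _ := abs_sum_le_sum_abs _ _
    _ ≤ _ := sum_le_sum fun i _ => hu.abs_expect_stein_trial_le hg he hν hq i
    _ = 19 * A₁ * e + (4 * A₂ + (2 + 3 / 2 * q) * A₃) * e * (1 - ν) := by
        rw [sum_const, card_univ, nsmul_eq_mul]
        linear_combination (19 * A₁ * e + (4 * A₂ + (2 + 3 / 2 * q) * A₃) * e *
          (Fintype.card N * ν + 1 - ν)) * hN
    _ ≤ 19 * A₁ * e + (4 * A₂ + (2 + 3 / 2 * q) * A₃) * e * 1 := by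
        gcongr
        linarith
    _ = _ := by ring

end IsIsotropicStep

end IsotropicSteps

section PermutationStatistics

variable {ι : Type*}

/-- The decrease of the rank statistic `permSum w x σ` when the ranks `σ I` and `σ J` are
exchanged. -/
def swapDiff (w x : ι → ℝ) (I J : ι) (σ : Equiv.Perm ι) : ℝ := (w I - w J) * (x (σ I) - x (σ J))

lemma swapDiff_mul_swap [DecidableEq ι] (w x : ι → ℝ) (I J : ι) (σ : Equiv.Perm ι) :
    swapDiff w x I J (σ * Equiv.swap I J) = -swapDiff w x I J σ := by
  simp only [swapDiff, Equiv.Perm.mul_apply, Equiv.swap_apply_left, Equiv.swap_apply_right]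
  ring

variable [Fintype ι]

/-- The linear rank statistic of `σ` with weights `w` and scores `x`. -/
def permSum (w x : ι → ℝ) (σ : Equiv.Perm ι) : ℝ := ∑ j, w j * x (σ j)

lemma sum_swapDiff {w : ι → ℝ} (hw : ∑ j, w j = 0) (x : ι → ℝ) (σ : Equiv.Perm ι) :
    ∑ I, ∑ J, swapDiff w x I J σ = 2 * Fintype.card ι * permSum w x σ := by
  have hexpand : ∀ I J, swapDiff w x I J σ =
      w I * x (σ I) + w J * x (σ J) - (w I * x (σ J) + x (σ I) * w J) := fun I J => by
    rw [swapDiff]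
    ring
  simp only [hexpand, sum_sub_distrib, sum_add_distrib, sum_const, card_univ, nsmul_eq_mul]
  simp only [← mul_sum, ← sum_mul, hw, permSum]
  ring

lemma sum_sum_sub_sq {w : ι → ℝ} (hw : ∑ j, w j = 0) :
    ∑ I, ∑ J, (w I - w J) ^ 2 = 2 * Fintype.card ι * ∑ j, w j ^ 2 := by
  simp only [sub_sq, sum_sub_distrib, sum_add_distrib, ← mul_sum, hw, sum_const, card_univ,
    nsmul_eq_mul, mul_zero]
  ring

variable [DecidableEq ι]

lemma permSum_mul_swap (w x : ι → ℝ) (I J : ι) (σ : Equiv.Perm ι) :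
    permSum w x (σ * Equiv.swap I J) = permSum w x σ - swapDiff w x I J σ := by
  rcases eq_or_ne I J with rfl | hIJ
  · simp [swapDiff, permSum]
  have hreindex : permSum w x (σ * Equiv.swap I J) = ∑ j, w (Equiv.swap I J j) * x (σ j) := by
    rw [permSum, ← Equiv.sum_comp (Equiv.swap I J)]
    simp
  have hpair := sum_subset (subset_univ ({I, J} : Finset ι))
    (f := fun j => w (Equiv.swap I J j) * x (σ j) - w j * x (σ j)) fun j _ hj => by
      simp only [mem_insert, mem_singleton, not_or] at hj
      rw [Equiv.swap_apply_of_ne_of_ne hj.1 hj.2, sub_self]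
  rw [sum_pair hIJ, sum_sub_distrib, Equiv.swap_apply_left, Equiv.swap_apply_right,
    ← hreindex, ← permSum] at hpair
  rw [swapDiff]
  linear_combination -hpair

lemma expect_comp_mul_swap (w x : ι → ℝ) (I J : ι) (f : ℝ → ℝ → ℝ) :
    𝔼 σ, f (-swapDiff w x I J σ) (permSum w x σ - swapDiff w x I J σ) =
      𝔼 σ, f (swapDiff w x I J σ) (permSum w x σ) :=
  Fintype.expect_equiv (Equiv.mulRight (Equiv.swap I J)) _ _ fun σ => by
    rw [Equiv.coe_mulRight, swapDiff_mul_swap, permSum_mul_swap]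

lemma two_mul_expect_swapDiff_mul (w x : ι → ℝ) (I J : ι) (f : ℝ → ℝ) :
    2 * 𝔼 σ, swapDiff w x I J σ * f (permSum w x σ) =
      𝔼 σ, swapDiff w x I J σ * (f (permSum w x σ) - f (permSum w x σ - swapDiff w x I J σ)) := by
  have hswap := expect_comp_mul_swap w x I J fun d t => d * f t
  simp only [neg_mul, expect_neg_distrib] at hswap
  simp only [mul_sub, expect_sub_distrib]
  linarith

/-- Stein's identity for the exchangeable pair formed by a uniform permutation and its composition
with an independent uniform transposition. -/
lemma expect_permSum_mul {w : ι → ℝ} (hw : ∑ j, w j = 0) (x : ι → ℝ) (f : ℝ → ℝ) :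
    4 * Fintype.card ι * 𝔼 σ, permSum w x σ * f (permSum w x σ) =
      ∑ I, ∑ J, 𝔼 σ, swapDiff w x I J σ *
        (f (permSum w x σ) - f (permSum w x σ - swapDiff w x I J σ)) := by
  calc _ = 2 * 𝔼 σ, (∑ I, ∑ J, swapDiff w x I J σ) * f (permSum w x σ) := by
        simp only [sum_swapDiff hw, mul_assoc, ← mul_expect]
        ring
    _ = ∑ I, ∑ J, 2 * 𝔼 σ, swapDiff w x I J σ * f (permSum w x σ) := by
        simp only [sum_mul, expect_sum_comm, mul_sum]
    _ = _ := by simp only [two_mul_expect_swapDiff_mul]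

lemma expect_sub_sq_comp_eq (x : ι → ℝ) {I J I' J' : ι} (h : I ≠ J) (h' : I' ≠ J') :
    𝔼 σ : Equiv.Perm ι, (x (σ I) - x (σ J)) ^ 2 =
      𝔼 σ : Equiv.Perm ι, (x (σ I') - x (σ J')) ^ 2 := by
  obtain ⟨τ, hI, hJ⟩ : ∃ τ : Equiv.Perm ι, τ I' = I ∧ τ J' = J := by
    refine ⟨Equiv.swap (Equiv.swap I' I J') J * Equiv.swap I' I, ?_, by simp⟩
    rw [Equiv.Perm.mul_apply, Equiv.swap_apply_left]
    refine Equiv.swap_apply_of_ne_of_ne (fun hc => h' ?_) h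
    exact (Equiv.swap I' I).injective (by rw [Equiv.swap_apply_left, ← hc])
  exact Fintype.expect_equiv (Equiv.mulRight τ) _ _ fun σ => by simp [hI, hJ]

lemma sum_sum_expect_sub_sq_comp {x : ι → ℝ} (hx : ∑ j, x j = 0) :
    ∑ I, ∑ J, 𝔼 σ : Equiv.Perm ι, (x (σ I) - x (σ J)) ^ 2 =
      2 * Fintype.card ι * ∑ j, x j ^ 2 := by
  simp only [← expect_sum_comm]
  have hreindex : ∀ σ : Equiv.Perm ι,
      ∑ I, ∑ J, (x (σ I) - x (σ J)) ^ 2 = 2 * Fintype.card ι * ∑ j, x j ^ 2 := fun σ => by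
    rw [← sum_sum_sub_sq hx, ← Equiv.sum_comp σ fun I => ∑ J, (x I - x J) ^ 2]
    exact sum_congr rfl fun I _ => Equiv.sum_comp σ fun J => (x (σ I) - x J) ^ 2
  simp only [hreindex, Fintype.expect_const]

lemma expect_sub_sq_comp {x : ι → ℝ} (hx : ∑ j, x j = 0) {I J : ι} (hIJ : I ≠ J) :
    (Fintype.card ι - 1) * 𝔼 σ : Equiv.Perm ι, (x (σ I) - x (σ J)) ^ 2 = 2 * ∑ j, x j ^ 2 := by
  have : Nonempty ι := ⟨I⟩
  set c := 𝔼 σ : Equiv.Perm ι, (x (σ I) - x (σ J)) ^ 2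
  have hpairs : ∀ I' J' : ι, 𝔼 σ : Equiv.Perm ι, (x (σ I') - x (σ J')) ^ 2 =
      (1 - if I' = J' then 1 else 0) * c := by
    intro I' J'
    rcases eq_or_ne I' J' with rfl | h
    · simp
    · rw [expect_sub_sq_comp_eq x h hIJ, if_neg h, sub_zero, one_mul]
  have htotal := sum_sum_expect_sub_sq_comp hx
  simp only [hpairs, ← sum_mul, sum_sub_distrib, sum_const, card_univ, nsmul_eq_mul, sum_ite_eq,
    mem_univ, if_true] at htotal
  refine mul_left_cancel₀ (Nat.cast_ne_zero.2 (Fintype.card_ne_zero (α := ι)) : (_ : ℝ) ≠ 0) ?_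
  linear_combination htotal

lemma expect_permSum_sq [Nonempty ι] {w x : ι → ℝ} (hw : ∑ j, w j = 0) (hx : ∑ j, x j = 0) :
    (Fintype.card ι - 1) * 𝔼 σ, permSum w x σ ^ 2 = (∑ j, x j ^ 2) * ∑ j, w j ^ 2 := by
  have hpair : ∀ I J, (Fintype.card ι - 1) * 𝔼 σ, swapDiff w x I J σ ^ 2 =
      2 * (∑ j, x j ^ 2) * (w I - w J) ^ 2 := by
    intro I J
    rcases eq_or_ne I J with rfl | hIJ
    · simp [swapDiff]
    · simp only [swapDiff, mul_pow, ← mul_expect]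
      linear_combination (w I - w J) ^ 2 * expect_sub_sq_comp hx hIJ
  have hstein : 4 * Fintype.card ι * 𝔼 σ, permSum w x σ ^ 2 =
      ∑ I, ∑ J, 𝔼 σ, swapDiff w x I J σ ^ 2 := by
    simpa only [sub_sub_cancel, sq] using expect_permSum_mul hw x fun t => t
  refine mul_left_cancel₀ (by positivity : (4 * Fintype.card ι : ℝ) ≠ 0) ?_
  calc _ = ∑ I, ∑ J, (Fintype.card ι - 1) * 𝔼 σ, swapDiff w x I J σ ^ 2 := by
        simp only [← mul_sum, ← hstein]
        ring
    _ = _ := by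
        simp only [hpair, ← mul_sum, sum_sum_sub_sq hw]
        ring

lemma expect_swapDiff_mul_cube_sub_le (w : ι → ℝ) {x : ι → ℝ} {D : ℝ}
    (hD : ∀ i j, (x i - x j) ^ 2 ≤ D) (I J : ι) :
    𝔼 σ, swapDiff w x I J σ *
        (permSum w x σ ^ 3 - (permSum w x σ - swapDiff w x I J σ) ^ 3) ≤
      3 * (w I - w J) ^ 2 * (D * 𝔼 σ, permSum w x σ ^ 2) := by
  have hsymm := expect_comp_mul_swap w x I J fun d t => d ^ 2 * t ^ 2
  simp only [neg_sq] at hsymm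
  calc _ ≤ 𝔼 σ, 3 / 2 * (swapDiff w x I J σ ^ 2 * permSum w x σ ^ 2 +
          swapDiff w x I J σ ^ 2 * (permSum w x σ - swapDiff w x I J σ) ^ 2) :=
        expect_le_expect fun σ _ => by nlinarith [sq_nonneg (swapDiff w x I J σ ^ 2)]
    _ = 3 * 𝔼 σ, swapDiff w x I J σ ^ 2 * permSum w x σ ^ 2 := by
        rw [← mul_expect, expect_add_distrib, hsymm]
        ring
    _ ≤ 3 * 𝔼 σ, (w I - w J) ^ 2 * (D * permSum w x σ ^ 2) := by
        refine mul_le_mul_of_nonneg_left (expect_le_expect fun σ _ => ?_) (by norm_num)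
        rw [swapDiff, mul_pow, mul_assoc]
        gcongr
        exact hD _ _
    _ = _ := by simp only [← mul_expect, mul_assoc]

lemma expect_permSum_pow_four_le [Nonempty ι] {w x : ι → ℝ} {D : ℝ} (hw : ∑ j, w j = 0)
    (hD : ∀ i j, (x i - x j) ^ 2 ≤ D) :
    𝔼 σ, permSum w x σ ^ 4 ≤ 3 / 2 * D * (∑ j, w j ^ 2) * 𝔼 σ, permSum w x σ ^ 2 := by
  refine le_of_mul_le_mul_left ?_ (by positivity : (0 : ℝ) < 4 * Fintype.card ι)
  calc 4 * Fintype.card ι * 𝔼 σ, permSum w x σ ^ 4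
      = ∑ I, ∑ J, 𝔼 σ, swapDiff w x I J σ *
          (permSum w x σ ^ 3 - (permSum w x σ - swapDiff w x I J σ) ^ 3) := by
        rw [← expect_permSum_mul hw x fun t => t ^ 3]
        simp only [← pow_succ']
    _ ≤ ∑ I, ∑ J, 3 * (w I - w J) ^ 2 * (D * 𝔼 σ, permSum w x σ ^ 2) :=
        sum_le_sum fun I _ => sum_le_sum fun J _ => expect_swapDiff_mul_cube_sub_le w hD I J
    _ = _ := by
        simp only [← sum_mul, ← mul_sum, sum_sum_sub_sq hw]
        ring

theorem isIsotropicStep_comp_perm [Nontrivial ι] {x : ι → ℝ} {D e ν q : ℝ} (τ : Equiv.Perm ι)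
    (hτ : ∀ j, x (τ j) = -x j) (hD : ∀ i j, (x i - x j) ^ 2 ≤ D) (he : ∑ j, x j ^ 2 = e)
    (hν : (Fintype.card ι - 1) * ν = e) (hq : 3 / 2 * D ≤ q * ν) :
    IsIsotropicStep (fun (σ : Equiv.Perm ι) j => x (σ j)) e ν q := by
  have hcard : (0 : ℝ) < Fintype.card ι - 1 :=
    sub_pos.2 (Nat.one_lt_cast.2 Fintype.one_lt_card)
  have hν₀ : 0 ≤ ν := nonneg_of_mul_nonneg_right
    (hν.symm ▸ he ▸ sum_nonneg fun j _ => sq_nonneg (x j)) hcard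
  have hx : ∑ j, x j = 0 := by
    have hneg := Equiv.sum_comp τ x
    simp only [hτ, sum_neg_distrib] at hneg
    linarith
  have hsecond : ∀ w : ι → ℝ, ∑ j, w j = 0 → 𝔼 σ, permSum w x σ ^ 2 = ν * ∑ j, w j ^ 2 :=
    fun w hw => mul_left_cancel₀ hcard.ne' <| by
      rw [expect_permSum_sq hw hx, he, ← hν, mul_assoc]
  refine ⟨fun σ => (Equiv.sum_comp σ x).trans hx,
    fun σ => (Equiv.sum_comp σ fun j => x j ^ 2).trans he, fun f => ?_, hsecond, fun w hw => ?_⟩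
  · refine Fintype.expect_equiv (Equiv.mulLeft τ) _ _ fun σ => congrArg f (funext fun j => ?_)
    simp [hτ]
  · calc 𝔼 σ, permSum w x σ ^ 4 ≤ 3 / 2 * D * (∑ j, w j ^ 2) * (ν * ∑ j, w j ^ 2) :=
          (expect_permSum_pow_four_le hw hD).trans_eq (by rw [hsecond w hw])
      _ ≤ q * ν * (∑ j, w j ^ 2) * (ν * ∑ j, w j ^ 2) := by gcongr
      _ = q * ν ^ 2 * (∑ j, w j ^ 2) ^ 2 := by ring

end PermutationStatistics

section Friedman

/-- The rank `j + 1` of `j : Fin r`, centred at the mean rank `(r + 1) / 2`. -/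
noncomputable def centredRank (r : ℕ) (j : Fin r) : ℝ := (j : ℕ) + 1 - ((r : ℝ) + 1) / 2

lemma centredRank_rev {r : ℕ} (j : Fin r) : centredRank r (Fin.rev j) = -centredRank r j := by
  rw [centredRank, centredRank, Fin.val_rev, Nat.cast_sub (Nat.succ_le_of_lt j.2)]
  push_cast
  ring

lemma centredRank_sub_sq_le {r : ℕ} (i j : Fin r) :
    (centredRank r i - centredRank r j) ^ 2 ≤ ((r : ℝ) - 1) ^ 2 := by
  have hlt : ∀ k : Fin r, ((k : ℕ) : ℝ) + 1 ≤ r := fun k => by exact_mod_cast k.2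
  have hnonneg : ∀ k : Fin r, (0 : ℝ) ≤ (k : ℕ) := fun k => Nat.cast_nonneg _
  rw [centredRank, centredRank]
  exact sq_le_sq' (by linarith [hlt j, hnonneg i]) (by linarith [hlt i, hnonneg j])

lemma sum_range_add_one_sub_sq (m : ℕ) (a : ℝ) : ∑ j ∈ range m, ((j : ℝ) + 1 - a) ^ 2 =
    m * (m + 1) * (2 * m + 1) / 6 - a * (m * (m + 1)) + m * a ^ 2 := by
  induction m with
  | zero => simp
  | succ m ih =>
    rw [sum_range_succ, ih]
    push_cast
    ring

lemma sum_centredRank_sq (r : ℕ) : ∑ j, centredRank r j ^ 2 = r * (r ^ 2 - 1) / 12 := by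
  simp only [centredRank]
  rw [Fin.sum_univ_eq_sum_range (fun j => ((j : ℝ) + 1 - ((r : ℝ) + 1) / 2) ^ 2) r,
    sum_range_add_one_sub_sq]
  ring

/-- The centred rank in the normalization of Friedman's statistic with `n` trials. -/
noncomputable def normalizedRank (n r : ℕ) (j : Fin r) : ℝ :=
  √12 / √((r : ℝ) * ((r : ℝ) + 1) * (n : ℝ)) * centredRank r j

lemma normalizedRank_rev {n r : ℕ} (j : Fin r) :
    normalizedRank n r (Fin.rev j) = -normalizedRank n r j := by
  rw [normalizedRank, centredRank_rev, mul_neg, normalizedRank]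

lemma sq_sqrt_twelve_div (n r : ℕ) :
    (√12 / √((r : ℝ) * ((r : ℝ) + 1) * (n : ℝ))) ^ 2 = 12 / (r * (r + 1) * n) := by
  rw [div_pow, sq_sqrt (by norm_num), sq_sqrt (by positivity)]

lemma sum_normalizedRank_sq {n r : ℕ} (hr : r ≠ 0) :
    ∑ j, normalizedRank n r j ^ 2 = ((r : ℝ) - 1) / n := by
  simp only [normalizedRank, mul_pow]
  rw [← mul_sum, sum_centredRank_sq, sq_sqrt_twelve_div]
  field_simp
  ring

lemma normalizedRank_sub_sq_le {n r : ℕ} (i j : Fin r) :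
    (normalizedRank n r i - normalizedRank n r j) ^ 2 ≤ 12 / n := by
  have hr : (1 : ℝ) ≤ r := by exact_mod_cast i.pos
  rw [normalizedRank, normalizedRank, ← mul_sub, mul_pow, sq_sqrt_twelve_div]
  calc 12 / (r * (r + 1) * n) * (centredRank r i - centredRank r j) ^ 2
      ≤ 12 / (r * (r + 1) * n) * (r * (r + 1)) := by
        gcongr
        exact (centredRank_sub_sq_le i j).trans (by nlinarith)
    _ = 12 / n := by field_simp

lemma isIsotropicStep_normalizedRank {n r : ℕ} (hr : 2 ≤ r) :
    IsIsotropicStep (fun (σ : Equiv.Perm (Fin r)) j => normalizedRank n r (σ j))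
      (((r : ℝ) - 1) / n) (1 / n) 18 := by
  have : Nontrivial (Fin r) := Fin.nontrivial_iff_two_le.2 hr
  refine isIsotropicStep_comp_perm Fin.revPerm normalizedRank_rev normalizedRank_sub_sq_le
    (sum_normalizedRank_sq (by omega)) ?_ (le_of_eq (by ring))
  rw [Fintype.card_fin, mul_one_div]

lemma friedman_eq_sumSqLength (n r : ℕ) (ω : Fin n → Equiv.Perm (Fin r)) :
    friedman n r ω = sumSqLength (fun σ j => normalizedRank n r (σ j)) ω := by
  simp only [friedman, sumSqLength, Sstat, rho, normalizedRank, centredRank, mul_sum]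

lemma integral_uniformOfFintype {α : Type*} [Fintype α] [Nonempty α] [MeasurableSpace α]
    [MeasurableSingletonClass α] (f : α → ℝ) :
    ∫ a, f a ∂(PMF.uniformOfFintype α).toMeasure = 𝔼 a, f a := by
  simp only [PMF.integral_eq_sum, PMF.uniformOfFintype_apply, ENNReal.toReal_inv,
    ENNReal.toReal_natCast, smul_eq_mul, ← mul_sum, Fintype.expect_eq_sum_div_card]
  rw [inv_mul_eq_div]

lemma integral_friedmanMeasure {n r : ℕ} (f : (Fin n → Equiv.Perm (Fin r)) → ℝ) :
    ∫ ω, f ω ∂(friedmanMeasure n r) = 𝔼 ω, f ω := by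
  have : DiscreteMeasurableSpace (Equiv.Perm (Fin r)) := ⟨fun _ => trivial⟩
  exact integral_uniformOfFintype f

end Friedman

theorem friedman_chiSq_smooth_test_function_bound_general {n r : ℕ} (hn : 1 ≤ n) (hr : 2 ≤ r)
    {h h' h'' : ℝ → ℝ} {C₁ C₂ : ℝ} (hc : ContinuousOn h (Set.Ici 0))
    (hd : ∀ x, 0 < x → HasDerivAt h (h' x) x) (hd' : ∀ x, 0 < x → HasDerivAt h' (h'' x) x)
    (hC₁ : ∀ x, 0 < x → |h' x| ≤ C₁) (hC₂ : ∀ x, 0 < x → |h'' x| ≤ C₂) :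
    |(∫ ω, h (friedman n r ω) ∂(friedmanMeasure n r)) - ∫ x, h x ∂(chiSq (r - 1))| ≤
      ((r : ℝ) - 1) / n * (289 * C₁ + 65 * C₂) := by
  have hn' : (0 : ℝ) < n := by exact_mod_cast hn
  have hr' : (0 : ℝ) < (r : ℝ) - 1 := by linarith [show (2 : ℝ) ≤ r by exact_mod_cast hr]
  have hC₁0 : 0 ≤ C₁ := (abs_nonneg _).trans (hC₁ 1 one_pos)
  have hC₂0 : 0 ≤ C₂ := (abs_nonneg _).trans (hC₂ 1 one_pos)
  have hp : ((r - 1 : ℕ) : ℝ) = r - 1 := by rw [Nat.cast_sub (by omega), Nat.cast_one]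
  obtain ⟨g, g', g'', g''', hg, hstein⟩ := exists_gamma_stein_solution
    (half_pos hr') (one_half_pos (α := ℝ)) hc hd hd' hC₁ hC₂
  have hbound := (isIsotropicStep_normalizedRank (n := n) hr).abs_expect_stein_sumSqLength_le
    (N := Fin n) hg (div_pos hr' hn') (by norm_num) (by simp [hn'.ne'])
  rw [Fintype.card_fin, mul_div_cancel₀ _ hn'.ne'] at hbound
  rw [integral_friedmanMeasure, chiSq, hp, ← Fintype.expect_const (ι := Fin n → Equiv.Perm (Fin r))
    (∫ x, h x ∂_), ← expect_sub_distrib]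
  simp only [friedman_eq_sumSqLength]
  rw [expect_congr rfl fun ω _ =>
    hstein (sumSqLength _ ω) (sum_nonneg fun j _ => sq_nonneg _)] at hbound
  refine hbound.trans (mul_le_mul_of_nonneg_left ?_ (by positivity))
  linarith

/-- **Theorem 1 (Gaunt–Reinert).** For `n ≥ 1`, `r ≥ 2` and `h ∈ C_b^{1,3}(ℝ⁺)`
(three times differentiable on `[0,∞)` with bounded first, second and third derivatives),
`|E[h(F_r)] − χ²_{(r−1)}h| ≤ (r/n)[293‖h'‖ + (2269 + 431r/n)‖h''‖ + (3533 + 646r/n)‖h'''‖]`. -/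
theorem friedman_chiSq_smooth_test_function_bound
    (n r : ℕ) (hn : 1 ≤ n) (hr : 2 ≤ r)
    (h h' h'' h''' : ℝ → ℝ)
    (hd1 : ∀ x ∈ Set.Ici (0 : ℝ), HasDerivAt h (h' x) x)
    (hd2 : ∀ x ∈ Set.Ici (0 : ℝ), HasDerivAt h' (h'' x) x)
    (hd3 : ∀ x ∈ Set.Ici (0 : ℝ), HasDerivAt h'' (h''' x) x)
    (C1 C2 C3 : ℝ)
    (hb1 : ∀ x ∈ Set.Ici (0 : ℝ), |h' x| ≤ C1)
    (hb2 : ∀ x ∈ Set.Ici (0 : ℝ), |h'' x| ≤ C2)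
    (hb3 : ∀ x ∈ Set.Ici (0 : ℝ), |h''' x| ≤ C3) :
    |(∫ ω, h (friedman n r ω) ∂(friedmanMeasure n r)) - ∫ x, h x ∂(chiSq (r - 1))|
      ≤ (r : ℝ) / n *
        (293 * C1 + (2269 + 431 * r / n) * C2 + (3533 + 646 * r / n) * C3) := by
  have hC1 : 0 ≤ C1 := (abs_nonneg _).trans (hb1 0 Set.self_mem_Ici)
  have hC2 : 0 ≤ C2 := (abs_nonneg _).trans (hb2 0 Set.self_mem_Ici)
  have hC3 : 0 ≤ C3 := (abs_nonneg _).trans (hb3 0 Set.self_mem_Ici)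
  calc _ ≤ ((r : ℝ) - 1) / n * (289 * C1 + 65 * C2) :=
        friedman_chiSq_smooth_test_function_bound_general hn hr
          (fun x hx => (hd1 x hx).continuousAt.continuousWithinAt) (fun x hx => hd1 x hx.le)
          (fun x hx => hd2 x hx.le) (fun x hx => hb1 x hx.le) fun x hx => hb2 x hx.le
    _ ≤ (r : ℝ) / n * (293 * C1 + 2269 * C2) := by
        gcongr <;> linarith
    _ ≤ _ := by
        refine mul_le_mul_of_nonneg_left ?_ (by positivity)
        linarith [show 0 ≤ 431 * (r : ℝ) / n * C2 by positivity,
          show 0 ≤ (3533 + 646 * (r : ℝ) / n) * C3 by positivity]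
end

section
/- Suppose n ≥ 1 and r = 2. Then for every Lipschitz function h : [0,∞) → ℝ with Lipschitz constant at most 1, |E[h(F_2)] − E[h(Y_1)]| ≤ (1/√n)·(87 + 48/√n). In particular, the Wasserstein distance between the law of F_2 and the chi-square distribution with 1 degree of freedom is at most (1/√n)(87 + 48/√n). -/
open MeasureTheory Finset Real

/-!
For two treatments, `F_2 = S ^ 2 / n` where `S` is the endpoint of an `n`-step simple random walk,
while `Y_1` is distributed as `Z ^ 2` for a standard Gaussian `Z`. Round `√n * |Z| + 3` down to a
lattice point of the walk, capped at `n`. The masses of consecutive cells of this rounding have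
ratio at least `exp (-2 * (2 * j - n) / n)`, whereas the binomial weights satisfy
`choose n (j + 1) / choose n j ≤ exp (-2 * (2 * j - n) / n)`. The likelihood ratio is thus
increasing, so by Chebyshev's association inequality `F_2` is stochastically dominated by
`(|Z| + 3 / √n) ^ 2`.

Since `E[F_2] = E[Z ^ 2] = 1` and `y + h y` is monotone for every 1-Lipschitz `h`, this domination
bounds `E[h(F_2)] - E[h(Y_1)]` from above; applying it to `-h` gives the bound from below.
-/

open ProbabilityTheory
open scoped NNReal

/-! ### Monotone likelihood ratios and binomial weights -/

lemma sum_mul_sum_le_of_monotoneOn_div {ι 𝕜 : Type*} [LinearOrder ι] [Field 𝕜] [LinearOrder 𝕜]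
    [IsStrictOrderedRing 𝕜] {s : Finset ι} {a b ψ : ι → 𝕜}
    (ha : ∀ i ∈ s, 0 ≤ a i) (hb : ∀ i ∈ s, 0 < b i) (hψ : ∀ i ∈ s, 0 ≤ ψ i)
    (hab : MonotoneOn (fun i => a i / b i) s) (hmono : MonotoneOn ψ s) :
    (∑ i ∈ s, a i) * ∑ i ∈ s, b i * ψ i ≤ (∑ i ∈ s, b i) * ∑ i ∈ s, a i * ψ i := by
  have hcancel : ∀ i : s, b i * (a i / b i) = a i := fun i => mul_div_cancel₀ _ (hb i i.2).ne'
  have hfkg := fkg (fun i : s => a i / b i) (fun i => ψ i) (fun i => b i)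
    (fun i => (hb i i.2).le) (fun i => div_nonneg (ha i i.2) (hb i i.2).le) (fun i => hψ i i.2)
    (fun i j hij => hab i.2 j.2 hij) (fun i j hij => hmono i.2 j.2 hij)
    (fun i j => by rcases le_total i j with h | h <;> simp [h, mul_comm])
  simp only [← mul_assoc, hcancel] at hfkg
  simpa only [sum_coe_sort s a, sum_coe_sort s b, sum_coe_sort s fun i => a i * ψ i,
    sum_coe_sort s fun i => b i * ψ i] using hfkg

lemma sum_range_eq_two_mul_sum_Ioc_half {R : Type*} [Semiring R] {n : ℕ} {g : ℕ → R}
    (hsymm : ∀ j ≤ n, g (n - j) = g j) (hmid : ∀ j, 2 * j = n → g j = 0) :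
    ∑ j ∈ range (n + 1), g j = 2 * ∑ j ∈ Ioc (n / 2) n, g j := by
  have hupper : ∑ j ∈ Ioc (n / 2) n, g j = ∑ j ∈ range (n + 1), if n < 2 * j then g j else 0 := by
    rw [← sum_filter]
    congr 1
    ext j
    simp only [mem_Ioc, Finset.mem_filter, Finset.mem_range]
    omega
  have hlower : ∑ j ∈ Ioc (n / 2) n, g j = ∑ j ∈ range (n + 1), if 2 * j < n then g j else 0 := by
    rw [hupper, ← sum_flip]
    refine sum_congr rfl fun j hj => ?_
    have hj : j ≤ n := mem_range_succ_iff.1 hj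
    rw [hsymm j hj]
    congr 1
    simp only [eq_iff_iff]
    omega
  rw [two_mul]
  nth_rw 1 [hupper, hlower]
  rw [← sum_add_distrib]
  refine sum_congr rfl fun j _ => ?_
  rcases lt_trichotomy n (2 * j) with h | h | h
  · simp [h, h.not_gt]
  · simp [← h, hmid j h.symm]
  · simp [h, h.not_gt]

lemma two_mul_sum_choose_Ioc_half_le (n : ℕ) : 2 * ∑ j ∈ Ioc (n / 2) n, n.choose j ≤ 2 ^ n := by
  have hfold := sum_range_eq_two_mul_sum_Ioc_half (n := n)
    (g := fun j => if 2 * j = n then 0 else n.choose j)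
    (fun j hj => by simp only [Nat.choose_symm hj, show 2 * (n - j) = n ↔ 2 * j = n by omega])
    (fun j hj => if_pos hj)
  have hupper : ∀ j ∈ Ioc (n / 2) n, (if 2 * j = n then 0 else n.choose j) = n.choose j :=
    fun j hj => if_neg (by have := (mem_Ioc.1 hj).1; omega)
  rw [← sum_congr rfl hupper, ← hfold, ← Nat.sum_range_choose]
  exact sum_le_sum fun j _ => by split_ifs <;> simp

lemma sum_range_choose_mul_sq (n : ℕ) :
    ∑ j ∈ range (n + 1), (n.choose j : ℝ) * (2 * j - n) ^ 2 = (n : ℝ) * 2 ^ n := by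
  have hvar := congrArg (Polynomial.eval (1 / 2 : ℝ)) (bernsteinPolynomial.variance ℝ n)
  simp only [Polynomial.eval_finsetSum, bernsteinPolynomial, nsmul_eq_mul, Polynomial.eval_mul,
    Polynomial.eval_pow, Polynomial.eval_sub, Polynomial.eval_natCast, Polynomial.eval_X,
    Polynomial.eval_one] at hvar
  have hterm : ∀ j ∈ range (n + 1), (n.choose j : ℝ) * (2 * j - n) ^ 2 =
      4 * 2 ^ n *
        (((n : ℝ) * (1 / 2) - j) ^ 2 * (n.choose j * (1 / 2) ^ j * (1 - 1 / 2) ^ (n - j))) := by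
    intro j hj
    have hpow : (1 / 2 : ℝ) ^ j * (1 - 1 / 2) ^ (n - j) * 2 ^ n = 1 := by
      rw [sub_half, ← pow_add, Nat.add_sub_cancel' (mem_range_succ_iff.1 hj), ← mul_pow]
      norm_num
    linear_combination (-(n.choose j : ℝ) * (2 * j - n) ^ 2) * hpow
  rw [sum_congr rfl hterm, ← mul_sum, hvar]
  ring

lemma choose_succ_le_exp_mul_choose {n j : ℕ} (hj : n ≤ 2 * j + 1) :
    (n.choose (j + 1) : ℝ) ≤ exp (-(2 * (2 * j - n : ℝ) / n)) * n.choose j := by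
  rcases le_or_gt n j with hnj | hjn
  · rw [Nat.choose_eq_zero_of_lt (by omega), Nat.cast_zero]
    positivity
  have hjn' : (j : ℝ) + 1 ≤ n := by exact_mod_cast hjn
  have hj' : (n : ℝ) ≤ 2 * j + 1 := by exact_mod_cast hj
  have hsub : (0 : ℝ) < n - j := by linarith
  have hn : (0 : ℝ) < n := by exact_mod_cast (by omega : 0 < n)
  have hexp : exp (2 * (2 * j - n : ℝ) / n) ≤ (j + 1) / (n - j) := by
    rw [← le_log_iff_exp_le (by positivity)]
    calc 2 * (2 * j - n : ℝ) / n ≤ 2 * (2 * j + 1 - n) / (n + 1) := by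
          rw [div_le_div_iff₀ hn (by linarith)]
          linarith
      _ = 2 * ((2 * j + 1 - n) / (n - j)) / ((2 * j + 1 - n) / (n - j) + 2) := by
          have hadd : (2 * j + 1 - n : ℝ) / (n - j) + 2 = (n + 1) / (n - j) := by
            field_simp
            ring
          rw [hadd]
          field_simp
      _ ≤ log (1 + (2 * j + 1 - n) / (n - j)) :=
          le_log_one_add_of_nonneg (div_nonneg (by linarith) hsub.le)
      _ = log ((j + 1) / (n - j)) := by
          congr 1
          field_simp
          ring
  have hchoose : (n.choose (j + 1) : ℝ) * (j + 1) = n.choose j * (n - j) := by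
    rw [← Nat.cast_sub hjn.le]
    exact_mod_cast Nat.choose_succ_right_eq n j
  rw [exp_neg, le_inv_mul_iff₀ (exp_pos _)]
  calc exp (2 * (2 * j - n : ℝ) / n) * n.choose (j + 1)
      ≤ (j + 1) / (n - j) * n.choose (j + 1) := by gcongr
    _ = n.choose j := by
        rw [div_mul_eq_mul_div, div_eq_iff hsub.ne']
        linarith

/-! ### Gaussian and chi-square integrals -/

lemma integral_sq_gaussianReal_zero (v : ℝ≥0) : ∫ x, x ^ 2 ∂(gaussianReal 0 v) = v := by
  rw [← variance_of_integral_eq_zero (by fun_prop) integral_id_gaussianReal,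
    variance_fun_id_gaussianReal]

lemma integral_abs_gaussianReal_zero_le (v : ℝ≥0) : ∫ x, |x| ∂(gaussianReal 0 v) ≤ √v := by
  refine le_sqrt_of_sq_le ?_
  have hvar := variance_nonneg (fun x => |x|) (gaussianReal 0 v)
  have hmem : MemLp (fun x => |x|) 2 (gaussianReal 0 v) := (memLp_id_gaussianReal 2).abs
  rw [variance_eq_sub hmem] at hvar
  simpa [integral_sq_gaussianReal_zero] using hvar

lemma integral_comp_abs_gaussianReal_zero {v : ℝ≥0} (hv : v ≠ 0) (f : ℝ → ℝ) :
    ∫ x, f |x| ∂(gaussianReal 0 v) = 2 * ∫ x in Set.Ioi 0, gaussianPDFReal 0 v x * f x := by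
  rw [integral_gaussianReal_eq_integral_smul hv, ← integral_comp_abs]
  simp [gaussianPDFReal, sq_abs]

lemma gaussianReal_real_eq_setIntegral (μ : ℝ) {v : ℝ≥0} (hv : v ≠ 0) (s : Set ℝ) :
    (gaussianReal μ v).real s = ∫ x in s, gaussianPDFReal μ v x := by
  rw [measureReal_def, gaussianReal_apply_eq_integral μ hv,
    ENNReal.toReal_ofReal (integral_nonneg (gaussianPDFReal_nonneg μ v))]

lemma gaussianReal_zero_real_preimage_abs {v : ℝ≥0} (hv : v ≠ 0) {s : Set ℝ}
    (hs : MeasurableSet s) :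
    (gaussianReal 0 v).real (abs ⁻¹' s) = 2 * (gaussianReal 0 v).real (s ∩ Set.Ioi 0) := by
  have h := integral_comp_abs_gaussianReal_zero hv (s.indicator 1)
  simp only [← Set.indicator_mul_right, Pi.one_apply, mul_one] at h
  rw [setIntegral_indicator hs, Set.inter_comm, ← gaussianReal_real_eq_setIntegral 0 hv] at h
  rw [← h, ← integral_indicator_one (measurable_abs hs)]
  rfl

lemma exp_mul_gaussianReal_real_le_of_add_mem {μ : ℝ} {v : ℝ≥0} (hv : v ≠ 0) {s t : Set ℝ}
    {M d : ℝ} (hs : MeasurableSet s) (ht : MeasurableSet t) (hd : 0 ≤ d)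
    (hM : ∀ x ∈ s, x ≤ M) (hst : ∀ x ∈ s, x + d ∈ t) :
    exp (-(((M - μ) * d + d ^ 2 / 2) / v)) * (gaussianReal μ v).real s ≤
      (gaussianReal μ v).real t := by
  have hpdf : ∀ x ∈ s, exp (-(((M - μ) * d + d ^ 2 / 2) / v)) * gaussianPDFReal μ v x ≤
      gaussianPDFReal (μ - d) v x := by
    intro x hx
    simp only [gaussianPDFReal]
    rw [mul_left_comm, ← exp_add]
    gcongr
    have hsq : -(x - (μ - d)) ^ 2 / (2 * v) =
        -(((x - μ) * d + d ^ 2 / 2) / v) + -(x - μ) ^ 2 / (2 * v) := by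
      field_simp
      ring
    rw [hsq]
    gcongr
    exact hM x hx
  have hshift : (gaussianReal (μ - d) v).map (· + d) = gaussianReal μ v := by
    rw [gaussianReal_map_add_const, sub_add_cancel]
  calc exp (-(((M - μ) * d + d ^ 2 / 2) / v)) * (gaussianReal μ v).real s
      = ∫ x in s, exp (-(((M - μ) * d + d ^ 2 / 2) / v)) * gaussianPDFReal μ v x := by
        rw [gaussianReal_real_eq_setIntegral μ hv, integral_const_mul]
    _ ≤ ∫ x in s, gaussianPDFReal (μ - d) v x :=
        setIntegral_mono_on ((integrable_gaussianPDFReal μ v).const_mul _).integrableOn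
          (integrable_gaussianPDFReal (μ - d) v).integrableOn hs hpdf
    _ = (gaussianReal (μ - d) v).real s := (gaussianReal_real_eq_setIntegral _ hv s).symm
    _ ≤ (gaussianReal (μ - d) v).real ((· + d) ⁻¹' t) := measureReal_mono hst
    _ = (gaussianReal μ v).real t := by
        rw [← map_measureReal_apply (measurable_add_const d) ht, hshift]

lemma integral_gammaMeasure {a r : ℝ} (ha : 0 < a) (hr : 0 < r) (f : ℝ → ℝ) :
    ∫ x, f x ∂(gammaMeasure a r) = ∫ x in Set.Ioi 0, gammaPDFReal a r x * f x := by
  have hneg : ∀ x ∉ Set.Ici (0 : ℝ), gammaPDFReal a r x * f x = 0 := by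
    intro x hx
    rw [gammaPDFReal, if_neg (by simpa using hx), zero_mul]
  have hmeas : Measurable (gammaPDF a r) := (measurable_gammaPDFReal a r).ennreal_ofReal
  rw [gammaMeasure, integral_withDensity_eq_integral_toReal_smul hmeas
    (ae_of_all _ fun x => ENNReal.ofReal_lt_top)]
  simp only [gammaPDF, ENNReal.toReal_ofReal (gammaPDFReal_nonneg ha hr _), smul_eq_mul]
  rw [← setIntegral_eq_integral_of_forall_compl_eq_zero hneg, integral_Ici_eq_integral_Ioi]

lemma mul_gammaPDFReal_half_sq {x : ℝ} (hx : 0 < x) :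
    x * gammaPDFReal (1 / 2) (1 / 2) (x ^ 2) = gaussianPDFReal 0 1 x := by
  have hrpow : (x ^ 2) ^ ((1 : ℝ) / 2 - 1) = x⁻¹ := by
    rw [← rpow_natCast, ← rpow_mul hx.le, ← rpow_neg_one]
    norm_num
  rw [gammaPDFReal, if_pos (sq_nonneg x), hrpow, Gamma_one_half_eq, ← sqrt_eq_rpow, gaussianPDFReal,
    NNReal.coe_one, mul_one, mul_one, sqrt_mul zero_le_two, one_div, sqrt_inv]
  field_simp
  simp

lemma integral_chiSq_one (f : ℝ → ℝ) :
    ∫ y, f y ∂(chiSq 1) = ∫ x, f (x ^ 2) ∂(gaussianReal 0 1) := by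
  have habs := integral_comp_abs_gaussianReal_zero one_ne_zero fun x => f (x ^ 2)
  simp only [sq_abs] at habs
  rw [chiSq, Nat.cast_one, integral_gammaMeasure one_half_pos one_half_pos,
    ← integral_comp_rpow_Ioi_of_pos zero_lt_two, habs, ← integral_const_mul]
  refine setIntegral_congr_fun measurableSet_Ioi fun x hx => ?_
  have hsub : (2 : ℝ) - 1 = 1 := by norm_num
  simp only [smul_eq_mul, rpow_two, ← mul_gammaPDFReal_half_sq hx, hsub, rpow_one]
  ring

/-! ### Friedman's statistic for two treatments -/

instance (r : ℕ) : MeasurableSingletonClass (Equiv.Perm (Fin r)) := ⟨fun _ => trivial⟩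

instance (n r : ℕ) : IsProbabilityMeasure (friedmanMeasure n r) :=
  PMF.toMeasure.isProbabilityMeasure _

lemma sum_rho_two_zero {n : ℕ} (ω : Fin n → Equiv.Perm (Fin 2)) :
    ∑ i, rho n 2 i 0 ω = (#{i | ω i 0 = 1} : ℝ) - n / 2 := by
  have hrho : ∀ i, rho n 2 i 0 ω = (if ω i 0 = 1 then 1 else 0) - 1 / 2 := by
    have hrank : ∀ σ : Equiv.Perm (Fin 2), (σ 0 : ℕ) = if σ 0 = 1 then 1 else 0 := by decide
    intro i
    rw [rho, hrank]
    push_cast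
    ring
  simp [hrho, sum_sub_distrib, div_eq_mul_inv]

lemma sum_rho_two_one {n : ℕ} (ω : Fin n → Equiv.Perm (Fin 2)) :
    ∑ i, rho n 2 i 1 ω = n / 2 - (#{i | ω i 0 = 1} : ℝ) := by
  have hrho : ∀ i, rho n 2 i 1 ω = -rho n 2 i 0 ω := by
    have hrank : ∀ σ : Equiv.Perm (Fin 2), (σ 0 : ℕ) + σ 1 = 1 := by decide
    intro i
    have hi : ((ω i 0 : ℕ) : ℝ) + (ω i 1 : ℕ) = 1 := by exact_mod_cast hrank (ω i)
    simp only [rho, Nat.cast_ofNat]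
    linarith
  rw [sum_congr rfl fun i _ => hrho i, sum_neg_distrib, sum_rho_two_zero, neg_sub]

lemma friedman_two_eq {n : ℕ} (ω : Fin n → Equiv.Perm (Fin 2)) :
    friedman n 2 ω = (2 * (#{i | ω i 0 = 1} : ℝ) - n) ^ 2 / n := by
  simp only [friedman, Fin.sum_univ_two, Sstat, sum_rho_two_zero, sum_rho_two_one, mul_pow, div_pow]
  rw [sq_sqrt (by positivity), sq_sqrt (by positivity)]
  push_cast
  field_simp
  ring

lemma bijective_filter_perm_two_zero_eq_one (ι : Type*) [Fintype ι] :
    Function.Bijective fun ω : ι → Equiv.Perm (Fin 2) => ({i | ω i 0 = 1} : Finset ι) := by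
  classical
  rw [Fintype.bijective_iff_injective_and_card]
  refine ⟨fun ω ω' h => funext fun i => ?_, by simp [Fintype.card_perm]⟩
  have hperm : ∀ σ τ : Equiv.Perm (Fin 2), (σ 0 = 1 ↔ τ 0 = 1) → σ = τ := by decide
  exact hperm _ _ (by simpa using Finset.ext_iff.1 h i)

lemma integral_friedman_two (n : ℕ) (f : ℝ → ℝ) :
    ∫ ω, f (friedman n 2 ω) ∂(friedmanMeasure n 2) =
      (∑ j ∈ range (n + 1), (n.choose j : ℝ) * f ((2 * j - n) ^ 2 / n)) / 2 ^ n := by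
  rw [friedmanMeasure, PMF.integral_eq_sum]
  simp only [PMF.uniformOfFintype_apply, smul_eq_mul, friedman_two_eq, ← mul_sum]
  rw [(bijective_filter_perm_two_zero_eq_one (Fin n)).sum_comp
      fun s : Finset (Fin n) => f ((2 * (#s : ℝ) - n) ^ 2 / n), ← powerset_univ,
    sum_powerset_apply_card fun j => f ((2 * (j : ℝ) - n) ^ 2 / n)]
  simp [Fintype.card_perm, div_eq_inv_mul]

lemma integral_friedman_two_eq_one {n : ℕ} (hn : n ≠ 0) :
    ∫ ω, friedman n 2 ω ∂(friedmanMeasure n 2) = 1 := by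
  rw [integral_friedman_two n fun y => y]
  simp only [← mul_div_assoc, ← sum_div, sum_range_choose_mul_sq]
  field_simp

/-! ### Stochastic domination -/

/-- The number `j` of up-steps for which the endpoint `2 * j - n` of an `n`-step simple random
walk is matched with the value `x ≥ 0` of `|Z|`: the largest `j ≤ n` with
`2 * j - n ≤ √n * x + 3`. -/
noncomputable def walkIndex (n : ℕ) (x : ℝ) : ℕ := min n ⌊(n + √n * x + 3) / 2⌋₊

lemma measurable_walkIndex (n : ℕ) : Measurable (walkIndex n) :=
  measurable_const.min (Nat.measurable_floor.comp (by fun_prop))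

lemma walkIndex_mem_Ioc {n : ℕ} (hn : n ≠ 0) {x : ℝ} (hx : 0 ≤ x) :
    walkIndex n x ∈ Ioc (n / 2) n := by
  have hfloor : n / 2 + 1 ≤ ⌊(n + √n * x + 3) / 2⌋₊ := by
    have hhalf : ((n / 2 : ℕ) : ℝ) ≤ n / 2 := Nat.cast_div_le
    have hsqrt : 0 ≤ √n * x := by positivity
    refine Nat.le_floor ?_
    push_cast
    linarith
  rw [walkIndex, mem_Ioc]
  omega

lemma two_mul_walkIndex_sub_le (n : ℕ) {x : ℝ} (hx : 0 ≤ x) :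
    2 * (walkIndex n x : ℝ) - n ≤ √n * x + 3 := by
  have hmin : (walkIndex n x : ℝ) ≤ ⌊(n + √n * x + 3) / 2⌋₊ :=
    Nat.cast_le.2 (min_le_right _ _)
  have hfloor : (⌊(n + √n * x + 3) / 2⌋₊ : ℝ) ≤ (n + √n * x + 3) / 2 :=
    Nat.floor_le (by positivity)
  linarith

lemma walkIndex_add_two_div_sqrt {n : ℕ} {x : ℝ} (hx : 0 ≤ x) (hlt : walkIndex n x < n) :
    walkIndex n (x + 2 / √n) = walkIndex n x + 1 := by
  have hsqrt : √(n : ℝ) ≠ 0 := by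
    have hn : n ≠ 0 := by omega
    positivity
  have hadd : (n + √n * (x + 2 / √n) + 3) / 2 = (n + √n * x + 3) / 2 + 1 := by
    field_simp
    ring
  unfold walkIndex at hlt ⊢
  rw [hadd, Nat.floor_add_one (by positivity)]
  omega

lemma sqrt_mul_lt_of_walkIndex_lt {n : ℕ} {x : ℝ} (hlt : walkIndex n x < n) :
    √n * x < 2 * walkIndex n x - n - 1 := by
  have hindex : walkIndex n x = ⌊(n + √n * x + 3) / 2⌋₊ := by
    unfold walkIndex at hlt ⊢
    omega
  have hfloor := Nat.lt_floor_add_one ((n + √n * x + 3) / 2)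
  rw [← hindex] at hfloor
  linarith

/-- The law of the walk index matched with `|Z|`, for a standard Gaussian `Z`. -/
noncomputable def walkIndexLaw (n : ℕ) : Measure ℕ :=
  (gaussianReal 0 1).map fun x => walkIndex n |x|

lemma measurable_walkIndex_abs (n : ℕ) : Measurable fun x => walkIndex n |x| :=
  (measurable_walkIndex n).comp measurable_abs

instance (n : ℕ) : IsProbabilityMeasure (walkIndexLaw n) :=
  Measure.isProbabilityMeasure_map (measurable_walkIndex_abs n).aemeasurable

lemma integral_walkIndexLaw (n : ℕ) (f : ℕ → ℝ) :
    ∫ j, f j ∂(walkIndexLaw n) = ∫ x, f (walkIndex n |x|) ∂(gaussianReal 0 1) :=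
  integral_map (measurable_walkIndex_abs n).aemeasurable
    (measurable_from_nat (f := f)).aestronglyMeasurable

lemma integral_walkIndexLaw_eq_sum {n : ℕ} (hn : n ≠ 0) (f : ℕ → ℝ) :
    ∫ j, f j ∂(walkIndexLaw n) = ∑ j ∈ Ioc (n / 2) n, (walkIndexLaw n).real {j} * f j := by
  have hsupp : ∀ᵐ j ∂(walkIndexLaw n), j ∈ (Ioc (n / 2) n : Set ℕ) :=
    (ae_map_iff (measurable_walkIndex_abs n).aemeasurable (Ioc (n / 2) n).measurableSet).2
      (ae_of_all _ fun x => walkIndex_mem_Ioc hn (abs_nonneg x))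
  rw [← Measure.restrict_eq_self_of_ae_mem hsupp, setIntegral_finset _ .finset,
    Measure.restrict_eq_self_of_ae_mem hsupp]
  simp only [smul_eq_mul]

lemma sum_walkIndexLaw_real {n : ℕ} (hn : n ≠ 0) :
    ∑ j ∈ Ioc (n / 2) n, (walkIndexLaw n).real {j} = 1 := by
  simpa using (integral_walkIndexLaw_eq_sum hn fun _ => 1).symm

lemma walkIndexLaw_real_singleton (n j : ℕ) :
    (walkIndexLaw n).real {j} =
      2 * (gaussianReal 0 1).real (walkIndex n ⁻¹' {j} ∩ Set.Ioi 0) := by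
  rw [walkIndexLaw, map_measureReal_apply (measurable_walkIndex_abs n) (measurableSet_singleton j),
    ← gaussianReal_zero_real_preimage_abs one_ne_zero
      (measurable_walkIndex n (measurableSet_singleton j))]
  rfl

lemma exp_mul_walkIndexLaw_real_le {n j : ℕ} (hj : j < n) :
    exp (-(2 * (2 * j - n : ℝ) / n)) * (walkIndexLaw n).real {j} ≤
      (walkIndexLaw n).real {j + 1} := by
  have hn : 0 < n := by omega
  have hsqrt : 0 < √(n : ℝ) := by positivity
  have hmeas : ∀ i, MeasurableSet (walkIndex n ⁻¹' {i} ∩ Set.Ioi 0) := fun i =>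
    (measurable_walkIndex n (measurableSet_singleton i)).inter measurableSet_Ioi
  have hexponent : (((2 * j - n - 1) / √n - 0) * (2 / √n) + (2 / √n) ^ 2 / 2) / (1 : ℝ≥0) =
      2 * (2 * j - n : ℝ) / n := by
    rw [NNReal.coe_one]
    field_simp
    rw [sq_sqrt n.cast_nonneg]
    ring
  have hupper : ∀ x ∈ walkIndex n ⁻¹' {j} ∩ Set.Ioi 0, x ≤ (2 * j - n - 1) / √n := by
    rintro x ⟨rfl, -⟩
    rw [le_div_iff₀' hsqrt]
    exact (sqrt_mul_lt_of_walkIndex_lt hj).le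
  have hadd : ∀ x ∈ walkIndex n ⁻¹' {j} ∩ Set.Ioi 0,
      x + 2 / √n ∈ walkIndex n ⁻¹' {j + 1} ∩ Set.Ioi 0 := by
    rintro x ⟨rfl, hx : 0 < x⟩
    exact ⟨walkIndex_add_two_div_sqrt hx.le hj, Set.mem_Ioi.2 (by positivity)⟩
  have hshift := exp_mul_gaussianReal_real_le_of_add_mem (μ := 0) one_ne_zero (hmeas j)
    (hmeas (j + 1)) (by positivity) hupper hadd
  rw [hexponent] at hshift
  rw [walkIndexLaw_real_singleton, walkIndexLaw_real_singleton, mul_left_comm]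
  gcongr

lemma monotoneOn_walkIndexLaw_real_div_choose (n : ℕ) :
    MonotoneOn (fun j => (walkIndexLaw n).real {j} / n.choose j) (Ioc (n / 2) n) := by
  rw [coe_Ioc]
  refine monotoneOn_of_le_add_one Set.ordConnected_Ioc fun j _ hj hj' => ?_
  rw [Set.mem_Ioc] at hj hj'
  have hchoose : (0 : ℝ) < n.choose j := by exact_mod_cast Nat.choose_pos hj.2
  have hchoose' : (0 : ℝ) < n.choose (j + 1) := by exact_mod_cast Nat.choose_pos hj'.2
  rw [div_le_div_iff₀ hchoose hchoose']
  calc (walkIndexLaw n).real {j} * n.choose (j + 1)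
      ≤ (walkIndexLaw n).real {j} * (exp (-(2 * (2 * j - n : ℝ) / n)) * n.choose j) := by
        gcongr
        exact choose_succ_le_exp_mul_choose (by omega)
    _ = exp (-(2 * (2 * j - n : ℝ) / n)) * (walkIndexLaw n).real {j} * n.choose j := by ring
    _ ≤ (walkIndexLaw n).real {j + 1} * n.choose j := by
        gcongr
        exact exp_mul_walkIndexLaw_real_le (by omega)

lemma sum_choose_mul_le_integral_walkIndexLaw {n : ℕ} (hn : n ≠ 0) {ψ : ℕ → ℝ}
    (hψ : ∀ j ∈ Ioc (n / 2) n, 0 ≤ ψ j) (hmono : MonotoneOn ψ (Ioc (n / 2) n))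
    (hsymm : ∀ j ≤ n, ψ (n - j) = ψ j) (hmid : ∀ j, 2 * j = n → ψ j = 0) :
    (∑ j ∈ range (n + 1), (n.choose j : ℝ) * ψ j) / 2 ^ n ≤ ∫ j, ψ j ∂(walkIndexLaw n) := by
  have hratio := sum_mul_sum_le_of_monotoneOn_div (b := fun j => (n.choose j : ℝ))
    (fun j _ => measureReal_nonneg)
    (fun j hj => Nat.cast_pos.2 (Nat.choose_pos (mem_Ioc.1 hj).2)) hψ
    (monotoneOn_walkIndexLaw_real_div_choose n) hmono
  rw [sum_walkIndexLaw_real hn, one_mul, ← integral_walkIndexLaw_eq_sum hn] at hratio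
  have hnonneg : 0 ≤ ∫ j, ψ j ∂(walkIndexLaw n) := by
    rw [integral_walkIndexLaw_eq_sum hn]
    exact sum_nonneg fun j hj => mul_nonneg measureReal_nonneg (hψ j hj)
  have hmass : 2 * ∑ j ∈ Ioc (n / 2) n, (n.choose j : ℝ) ≤ 2 ^ n := by
    exact_mod_cast two_mul_sum_choose_Ioc_half_le n
  rw [div_le_iff₀' (by positivity), sum_range_eq_two_mul_sum_Ioc_half
    (fun j hj => by rw [Nat.choose_symm hj, hsymm j hj]) (fun j hj => by rw [hmid j hj, mul_zero])]
  calc 2 * ∑ j ∈ Ioc (n / 2) n, (n.choose j : ℝ) * ψ j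
      ≤ 2 * ((∑ j ∈ Ioc (n / 2) n, (n.choose j : ℝ)) * ∫ j, ψ j ∂(walkIndexLaw n)) := by gcongr
    _ = (2 * ∑ j ∈ Ioc (n / 2) n, (n.choose j : ℝ)) * ∫ j, ψ j ∂(walkIndexLaw n) := by ring
    _ ≤ 2 ^ n * ∫ j, ψ j ∂(walkIndexLaw n) := by gcongr

lemma sq_two_mul_walkIndex_abs_sub_div_le {n : ℕ} (hn : n ≠ 0) (x : ℝ) :
    (2 * (walkIndex n |x| : ℝ) - n) ^ 2 / n ≤ (|x| + 3 / √n) ^ 2 := by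
  have hsqrt : √(n : ℝ) ≠ 0 := by positivity
  have hmid : (n : ℝ) ≤ 2 * walkIndex n |x| := by
    have := (mem_Ioc.1 (walkIndex_mem_Ioc hn (abs_nonneg x))).1
    exact_mod_cast (by omega : n ≤ 2 * walkIndex n |x|)
  calc (2 * (walkIndex n |x| : ℝ) - n) ^ 2 / n ≤ (√n * |x| + 3) ^ 2 / n := by
        gcongr
        exact two_mul_walkIndex_sub_le n (abs_nonneg x)
    _ = (√n * |x| + 3) ^ 2 / √n ^ 2 := by rw [sq_sqrt n.cast_nonneg]
    _ = (|x| + 3 / √n) ^ 2 := by field_simp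

lemma integral_friedman_two_le_of_monotone {n : ℕ} (hn : n ≠ 0) {u : ℝ → ℝ} (hu : Monotone u)
    (hint : Integrable (fun x => u ((|x| + 3 / √n) ^ 2)) (gaussianReal 0 1)) :
    ∫ ω, u (friedman n 2 ω) ∂(friedmanMeasure n 2) ≤
      ∫ x, u ((|x| + 3 / √n) ^ 2) ∂(gaussianReal 0 1) := by
  let ψ : ℕ → ℝ := fun j => u ((2 * j - n) ^ 2 / n) - u 0
  have hψ : ∀ j, 0 ≤ ψ j := fun j => sub_nonneg.2 (hu (by positivity))
  have hmono : MonotoneOn ψ (Ioc (n / 2) n) := by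
    intro i hi j _ hij
    have hi : (n : ℝ) ≤ 2 * i := by
      have := (mem_Ioc.1 hi).1
      exact_mod_cast (by omega : n ≤ 2 * i)
    refine sub_le_sub_right (hu ?_) _
    gcongr
  have hsymm : ∀ j ≤ n, ψ (n - j) = ψ j := fun j hj => by
    simp only [ψ, Nat.cast_sub hj]
    ring_nf
  have hmid : ∀ j, 2 * j = n → ψ j = 0 := fun j hj => by simp [ψ, ← hj]
  refine sub_le_sub_iff_right (u 0) |>.1 ?_
  calc (∫ ω, u (friedman n 2 ω) ∂(friedmanMeasure n 2)) - u 0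
      = ∫ ω, (u (friedman n 2 ω) - u 0) ∂(friedmanMeasure n 2) := by
        rw [integral_sub .of_finite (integrable_const _), integral_const, probReal_univ, one_smul]
    _ = (∑ j ∈ range (n + 1), (n.choose j : ℝ) * ψ j) / 2 ^ n :=
        integral_friedman_two n fun y => u y - u 0
    _ ≤ ∫ j, ψ j ∂(walkIndexLaw n) :=
        sum_choose_mul_le_integral_walkIndexLaw hn (fun j _ => hψ j) hmono hsymm hmid
    _ = ∫ x, ψ (walkIndex n |x|) ∂(gaussianReal 0 1) := integral_walkIndexLaw n ψ
    _ ≤ ∫ x, (u ((|x| + 3 / √n) ^ 2) - u 0) ∂(gaussianReal 0 1) :=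
        integral_mono_of_nonneg (ae_of_all _ fun x => hψ _) (hint.sub (integrable_const _))
          (ae_of_all _ fun x => sub_le_sub_right (hu (sq_two_mul_walkIndex_abs_sub_div_le hn x)) _)
    _ = (∫ x, u ((|x| + 3 / √n) ^ 2) ∂(gaussianReal 0 1)) - u 0 := by
        rw [integral_sub hint (integrable_const _), integral_const, probReal_univ, one_smul]

/-! ### Lipschitz test functions -/

lemma integrable_comp_of_lipschitzWith {Ω E F : Type*} [MeasurableSpace Ω] [NormedAddCommGroup E]
    [NormedAddCommGroup F] {μ : Measure Ω} [IsFiniteMeasure μ] {K : ℝ≥0} {g : E → F}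
    (hg : LipschitzWith K g) {X : Ω → E} (hX : Integrable X μ) :
    Integrable (fun ω => g (X ω)) μ := by
  have hcentred : LipschitzWith K fun x => g x - g 0 := by
    simpa using hg.sub (LipschitzWith.const (g 0))
  have hmem := hcentred.comp_memLp (sub_self _) (memLp_one_iff_integrable.2 hX)
  simpa only [Function.comp_def, Pi.add_def, sub_add_cancel] using
    (memLp_one_iff_integrable.1 hmem).add (integrable_const (g 0))

lemma monotone_id_add_of_lipschitzWith_one {h : ℝ → ℝ} (hL : LipschitzWith 1 h) :
    Monotone fun y => y + h y := by
  intro x y hxy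
  have hdist := hL.dist_le_mul x y
  rw [Real.dist_eq, dist_comm, Real.dist_eq, abs_of_nonneg (sub_nonneg.2 hxy), NNReal.coe_one,
    one_mul] at hdist
  change x + h x ≤ y + h y
  linarith [le_abs_self (h x - h y)]

lemma integrable_sq_abs_add_gaussianReal (δ μ : ℝ) (v : ℝ≥0) :
    Integrable (fun x => (|x| + δ) ^ 2) (gaussianReal μ v) :=
  ((memLp_id_gaussianReal 2).abs.add (memLp_const δ)).integrable_sq

lemma add_comp_sq_add_le_of_lipschitzWith_one {h : ℝ → ℝ} (hL : LipschitzWith 1 h) {x δ : ℝ}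
    (hx : 0 ≤ x) (hδ : 0 ≤ δ) :
    (x + δ) ^ 2 + h ((x + δ) ^ 2) ≤ x ^ 2 + h (x ^ 2) + (4 * δ * x + 2 * δ ^ 2) := by
  have hdist := hL.dist_le_mul ((x + δ) ^ 2) (x ^ 2)
  have hdiff : (x + δ) ^ 2 - x ^ 2 = 2 * δ * x + δ ^ 2 := by ring
  rw [Real.dist_eq, Real.dist_eq, hdiff, NNReal.coe_one, one_mul,
    abs_of_nonneg (by positivity : 0 ≤ 2 * δ * x + δ ^ 2)] at hdist
  linarith [le_abs_self (h ((x + δ) ^ 2) - h (x ^ 2))]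

lemma integral_sq_abs_add_add_comp_gaussianReal_le {h : ℝ → ℝ} (hL : LipschitzWith 1 h) {δ : ℝ}
    (hδ : 0 ≤ δ) :
    ∫ x, ((|x| + δ) ^ 2 + h ((|x| + δ) ^ 2)) ∂(gaussianReal 0 1) ≤
      1 + ∫ x, h (x ^ 2) ∂(gaussianReal 0 1) + (4 * δ + 2 * δ ^ 2) := by
  have hsq : Integrable (fun x => x ^ 2) (gaussianReal 0 1) := by
    simpa using integrable_sq_abs_add_gaussianReal 0 0 1
  have hh := integrable_comp_of_lipschitzWith hL hsq
  have hsum : Integrable (fun x => x ^ 2 + h (x ^ 2)) (gaussianReal 0 1) := hsq.add hh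
  have habs : Integrable (fun x => 4 * δ * |x|) (gaussianReal 0 1) :=
    (memLp_one_iff_integrable.1 (memLp_id_gaussianReal 1)).abs.const_mul _
  have herror : Integrable (fun x => 4 * δ * |x| + 2 * δ ^ 2) (gaussianReal 0 1) :=
    habs.add (integrable_const _)
  have hδsq := integrable_sq_abs_add_gaussianReal δ 0 1
  calc ∫ x, ((|x| + δ) ^ 2 + h ((|x| + δ) ^ 2)) ∂(gaussianReal 0 1)
      ≤ ∫ x, (x ^ 2 + h (x ^ 2) + (4 * δ * |x| + 2 * δ ^ 2)) ∂(gaussianReal 0 1) := by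
        refine integral_mono (hδsq.add (integrable_comp_of_lipschitzWith hL hδsq))
          (hsum.add herror) fun x => ?_
        simpa only [sq_abs] using add_comp_sq_add_le_of_lipschitzWith_one hL (abs_nonneg x) hδ
    _ = 1 + ∫ x, h (x ^ 2) ∂(gaussianReal 0 1) +
          (4 * δ * ∫ x, |x| ∂(gaussianReal 0 1) + 2 * δ ^ 2) := by
        rw [integral_add hsum herror, integral_add hsq hh,
          integral_add habs (integrable_const _), integral_const_mul,
          integral_sq_gaussianReal_zero, NNReal.coe_one, integral_const, probReal_univ, one_smul]
    _ ≤ 1 + ∫ x, h (x ^ 2) ∂(gaussianReal 0 1) + (4 * δ * 1 + 2 * δ ^ 2) := by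
        gcongr
        simpa using integral_abs_gaussianReal_zero_le 1
    _ = 1 + ∫ x, h (x ^ 2) ∂(gaussianReal 0 1) + (4 * δ + 2 * δ ^ 2) := by rw [mul_one]

lemma integral_friedman_two_sub_integral_chiSq_one_le {n : ℕ} (hn : n ≠ 0) {h : ℝ → ℝ}
    (hL : LipschitzWith 1 h) :
    (∫ ω, h (friedman n 2 ω) ∂(friedmanMeasure n 2)) - ∫ y, h y ∂(chiSq 1) ≤
      12 / √n + 18 / n := by
  have hint := integrable_sq_abs_add_gaussianReal (3 / √n) 0 1
  have hdom := integral_friedman_two_le_of_monotone hn (monotone_id_add_of_lipschitzWith_one hL)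
    (hint.add (integrable_comp_of_lipschitzWith hL hint))
  rw [integral_add .of_finite .of_finite, integral_friedman_two_eq_one hn] at hdom
  have hgauss := integral_sq_abs_add_add_comp_gaussianReal_le hL (δ := 3 / √n) (by positivity)
  rw [← integral_chiSq_one] at hgauss
  have herror : 4 * (3 / √n) + 2 * (3 / √n) ^ 2 = 12 / √n + 18 / (n : ℝ) := by
    rw [div_pow, sq_sqrt n.cast_nonneg]
    ring
  linarith

lemma abs_integral_friedman_two_sub_integral_chiSq_one_le {n : ℕ} (hn : n ≠ 0) {h : ℝ → ℝ}
    (hL : LipschitzWith 1 h) :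
    |(∫ ω, h (friedman n 2 ω) ∂(friedmanMeasure n 2)) - ∫ y, h y ∂(chiSq 1)| ≤
      12 / √n + 18 / n := by
  have hneg := integral_friedman_two_sub_integral_chiSq_one_le hn hL.neg
  simp only [Pi.neg_apply, integral_neg] at hneg
  exact abs_le.2 ⟨by linarith, integral_friedman_two_sub_integral_chiSq_one_le hn hL⟩

/-- **Proposition 1.4, (1.5) (Gaunt–Reinert).** For `n ≥ 1` and every Lipschitz function
`h : ℝ⁺ → ℝ` with Lipschitz constant at most 1,
`|E[h(F_2)] − E[h(Y_1)]| ≤ (1/√n)(87 + 48/√n)`; that is, the Wasserstein distance between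
the law of `F_2` and the chi-square distribution with 1 degree of freedom is at most
`(1/√n)(87 + 48/√n)`. -/
theorem friedman_two_wasserstein_bound (n : ℕ) (hn : 1 ≤ n)
    (h : ℝ → ℝ) (hL : LipschitzWith 1 h) :
    |(∫ ω, h (friedman n 2 ω) ∂(friedmanMeasure n 2)) - ∫ x, h x ∂(chiSq 1)|
      ≤ 1 / Real.sqrt n * (87 + 48 / Real.sqrt n) := by
  calc |(∫ ω, h (friedman n 2 ω) ∂(friedmanMeasure n 2)) - ∫ x, h x ∂(chiSq 1)|
      ≤ 12 / √n + 18 / n := abs_integral_friedman_two_sub_integral_chiSq_one_le (by omega) hL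
    _ ≤ 87 / √n + 48 / n := by gcongr <;> norm_num
    _ = 1 / √n * (87 + 48 / √n) := by
        rw [mul_add, div_mul_div_comm, mul_self_sqrt n.cast_nonneg]
        ring
end
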